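/- arXiv:1412.4259 — 2 statements merged into one kernel-verified Lean document; each statement's English description precedes it below -/
import Mathlib

section
/- There exists a constant c ∈ ℕ such that the following holds. Let b ∈ ℤ², let P ⊆ ℤ² be a finite set with b ∈ P, and let Z be a quadrant. Then there exist a finite index set I and, for each i ∈ I, a vector c_i ∈ ℤ² and a finite set P_i ⊆ ℤ², such that L(b;P) ∩ Z = ⋃_{i∈I} L(c_i; P_i), and for each i ∈ I: (i) |P_i| ≤ 2; (ii) P_i ⊆ (P ∪ L(b;P)) ∩ Z; and (iii) there exists e ≤ (‖P‖+2)^c such that {c_i} ∪ (P_i ∩ L(b;P)) ⊆ b + cone_{[0,e]}(P). -/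
namespace LinSets

/-- Integer vectors of dimension 2. -/
abbrev Vec2 := Fin 2 → ℤ

/-- The norm of a vector: maximum of absolute values of its components. -/
def vnorm (z : Vec2) : ℕ := Finset.univ.sup fun i => (z i).natAbs

/-- The norm of a finite set of vectors. -/
def pnorm (P : Finset Vec2) : ℕ := P.sup vnorm

/-- The linear set `L(b;P) = b + cone_ℕ(P)`. -/
def LinSet (b : Vec2) (P : Finset Vec2) : Set Vec2 :=
  {v | ∃ lam : Vec2 → ℕ, v = b + ∑ p ∈ P, (lam p : ℤ) • p}

/-- `cone_{[0,e]}(P)`: non-negative integer combinations of `P` with all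
coefficients at most `e`. -/
def ConeLe (e : ℕ) (P : Finset Vec2) : Set Vec2 :=
  {v | ∃ lam : Vec2 → ℕ, (∀ p ∈ P, lam p ≤ e) ∧ v = ∑ p ∈ P, (lam p : ℤ) • p}

/-- A quadrant of ℤ². -/
def IsQuadrant (Z : Set Vec2) : Prop :=
  ∃ ε : Fin 2 → Bool, Z = {v | ∀ i, if ε i then 0 ≤ v i else v i ≤ 0}

end LinSets
namespace LinSets

theorem topslope {ι : Type*} (H : Finset ι) (x y : ι → ℤ) (h : ∃ j ∈ H, 0 < x j) :
    ∃ j ∈ H, 0 < x j ∧ ∀ i ∈ H, 0 < x i → x j * y i - y j * x i ≤ 0 := by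
  classical
  obtain ⟨j, hj, hmax⟩ := Finset.exists_max_image (H.filter (fun i => 0 < x i))
    (fun i => (y i : ℚ) / x i) (by obtain ⟨j, hj, h0⟩ := h; exact ⟨j, by simp [hj, h0]⟩)
  simp only [Finset.mem_filter] at hj hmax
  refine ⟨j, hj.1, hj.2, fun i hi hxi => ?_⟩
  have := hmax i ⟨hi, hxi⟩
  rw [div_le_div_iff₀ (by exact_mod_cast hxi) (by exact_mod_cast hj.2)] at this
  have h2 : y i * x j ≤ y j * x i := by exact_mod_cast this
  linarith [mul_comm (y i) (x j)]

theorem sum_lin {ι : Type*} (H : Finset ι) (x y : ι → ℤ) (l : ι → ℕ) (a b : ℤ) :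
    ∑ i ∈ H, (l i : ℤ) * (a * x i + b * y i) =
      a * ∑ i ∈ H, (l i : ℤ) * x i + b * ∑ i ∈ H, (l i : ℤ) * y i := by
  rw [Finset.mul_sum, Finset.mul_sum, ← Finset.sum_add_distrib]
  exact Finset.sum_congr rfl fun i _ => by ring

theorem lemN {ι : Type*} (H : Finset ι) (x y : ι → ℤ) (l : ι → ℕ) (M B : ℤ) (hM : 0 ≤ M)
    (hx : ∀ i ∈ H, |x i| ≤ M) (hy : ∀ i ∈ H, |y i| ≤ M)
    (hBx : |∑ i ∈ H, (l i : ℤ) * x i| ≤ B) (hBy : -B ≤ ∑ i ∈ H, (l i : ℤ) * y i)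
    (h0 : ∀ i ∈ H, x i = 0 → y i < 0)
    (h1 : ∀ i ∈ H, ∀ j ∈ H, x i < 0 → 0 < x j → x j * y i - x i * y j < 0) :
    ∑ i ∈ H, (l i : ℤ) ≤ B * (1 + 2 * (M + 1) ^ 2) := by
  have hB : 0 ≤ B := le_trans (abs_nonneg _) hBx
  rw [abs_le] at hBx
  have key : ∀ a b : ℤ, (∀ i ∈ H, 1 ≤ a * x i + b * y i) →
      ∑ i ∈ H, (l i : ℤ) ≤ a * ∑ i ∈ H, (l i : ℤ) * x i + b * ∑ i ∈ H, (l i : ℤ) * y i := by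
    intro a b h
    rw [← sum_lin]
    refine Finset.sum_le_sum fun i hi => ?_
    have := h i hi
    nlinarith [Int.natCast_nonneg (l i)]
  by_cases hp : ∃ j ∈ H, 0 < x j
  · obtain ⟨j, hj, hxj, hmax⟩ := topslope H x y hp
    have hxM := abs_le.1 (hx j hj)
    have hyM := abs_le.1 (hy j hj)
    have := key (1 + (M+1) * y j) (-(M+1) * x j) (by
      intro i hi
      have hxi := abs_le.1 (hx i hi)
      rcases lt_trichotomy (x i) 0 with h | h | h
      · have := h1 i hi j hj h hxj
        have h3 : 1 ≤ y j * x i - x j * y i := by linarith [mul_comm (x i) (y j)]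
        nlinarith
      · have := h0 i hi h
        have h3 : 1 ≤ y j * x i - x j * y i := by rw [h]; nlinarith
        nlinarith
      · have h3 : 0 ≤ y j * x i - x j * y i := by linarith [hmax i hi h]
        nlinarith)
    refine this.trans ?_
    set hX := ∑ i ∈ H, (l i : ℤ) * x i
    set hY := ∑ i ∈ H, (l i : ℤ) * y i
    have e1 : y j * hX ≤ M * B := by
      calc y j * hX ≤ |y j * hX| := le_abs_self _
        _ = |y j| * |hX| := abs_mul _ _
        _ ≤ M * B := mul_le_mul (hy j hj) (abs_le.2 hBx) (abs_nonneg _) hM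
    have e2 : x j * (-hY) ≤ M * B := by nlinarith
    nlinarith [mul_nonneg hM hB, mul_nonneg (mul_nonneg hM hM) hB]
  · push Not at hp
    have := key (-(M+1)) (-1) (by
      intro i hi
      have hyi := abs_le.1 (hy i hi)
      rcases lt_or_eq_of_le (hp i hi) with h | h
      · nlinarith
      · have := h0 i hi h
        rw [h]; linarith)
    refine this.trans ?_
    nlinarith [mul_nonneg hM hB, mul_nonneg (mul_nonneg hM hM) hB]

theorem comb2 {ι : Type*} (H : Finset ι) (i j : ι) (hi : i ∈ H) (hj : j ∈ H) (a b : ℕ) :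
    ∃ μ : ι → ℕ, (∀ k, k ∉ H → μ k = 0) ∧ (∀ k, μ k ≤ a + b) ∧ (a ≤ μ i) ∧
      ∀ x : ι → ℤ, ∑ k ∈ H, (μ k : ℤ) * x k = a * x i + b * x j := by
  classical
  refine ⟨fun k => (if k = i then a else 0) + (if k = j then b else 0), ?_, ?_, ?_, ?_⟩
  · intro k hk
    have h1 : k ≠ i := fun h => hk (h ▸ hi)
    have h2 : k ≠ j := fun h => hk (h ▸ hj)
    simp [h1, h2]
  · intro k
    dsimp only
    split_ifs <;> omega
  · simp
  · intro x
    simp [add_mul, Finset.sum_add_distrib, hi, hj]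

theorem axisB {ι : Type*} (H : Finset ι) (x y : ι → ℤ) (M : ℕ)
    (hx : ∀ i ∈ H, |x i| ≤ M) (hy : ∀ i ∈ H, |y i| ≤ M)
    (i j : ι) (hi : i ∈ H) (hj : j ∈ H) (h1 : x i < 0) (h2 : 0 < x j) :
    ∃ μ : ι → ℕ, (∀ k, k ∉ H → μ k = 0) ∧ (∀ k, μ k ≤ 2 * M + 1) ∧ (∃ k ∈ H, 0 < μ k) ∧
      ∑ k ∈ H, (μ k : ℤ) * x k = 0 ∧ ∑ k ∈ H, (μ k : ℤ) * y k = x j * y i - x i * y j ∧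
      x j * y i - x i * y j ≤ 2 * M ^ 2 + M := by
  obtain ⟨μ, m1, m2, m3, m4⟩ := comb2 H i j hi hj (x j).toNat (-x i).toNat
  have a1 := abs_le.1 (hx i hi)
  have a2 := abs_le.1 (hx j hj)
  have b1 := abs_le.1 (hy i hi)
  have b2 := abs_le.1 (hy j hj)
  have c1 : (((x j).toNat : ℕ) : ℤ) = x j := Int.toNat_of_nonneg h2.le
  have c2 : (((-x i).toNat : ℕ) : ℤ) = - x i := Int.toNat_of_nonneg (by omega)
  refine ⟨μ, m1, fun k => (m2 k).trans (by omega), ⟨i, hi, by omega⟩, ?_, ?_, ?_⟩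
  · rw [m4, c1, c2]; ring
  · rw [m4, c1, c2]; ring
  · have e1 : x j * y i ≤ M * M := by nlinarith
    have e2 : - x i * y j ≤ M * M := by nlinarith
    nlinarith

theorem single1 {ι : Type*} (H : Finset ι) (M : ℕ) (i : ι) (hi : i ∈ H) :
    ∃ μ : ι → ℕ, (∀ k, k ∉ H → μ k = 0) ∧ (∀ k, μ k ≤ 2 * M + 1) ∧ (∃ k ∈ H, 0 < μ k) ∧
      ∀ x : ι → ℤ, ∑ k ∈ H, (μ k : ℤ) * x k = x i := by
  obtain ⟨μ, m1, m2, m3, m4⟩ := comb2 H i i hi hi 1 0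
  exact ⟨μ, m1, fun k => (m2 k).trans (by omega), ⟨i, hi, by omega⟩, fun x => by simp [m4]⟩

theorem axis {ι : Type*} (H : Finset ι) (x y : ι → ℤ) (l : ι → ℕ) (M : ℕ) (B : ℤ)
    (hx : ∀ i ∈ H, |x i| ≤ M) (hy : ∀ i ∈ H, |y i| ≤ M)
    (hBx : |∑ i ∈ H, (l i : ℤ) * x i| ≤ B) (hBy : -B ≤ ∑ i ∈ H, (l i : ℤ) * y i)
    (hl : B * (1 + 2 * (M + 1) ^ 2) < ∑ i ∈ H, (l i : ℤ)) :
    ∃ μ : ι → ℕ, (∀ k, k ∉ H → μ k = 0) ∧ (∀ k, μ k ≤ 2 * M + 1) ∧ (∃ k ∈ H, 0 < μ k) ∧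
      ∑ k ∈ H, (μ k : ℤ) * x k = 0 ∧ 0 ≤ ∑ k ∈ H, (μ k : ℤ) * y k ∧
      ∑ k ∈ H, (μ k : ℤ) * y k ≤ 2 * M ^ 2 + M := by
  by_contra hcon
  refine absurd (lemN H x y l M B (by positivity) hx hy hBx hBy ?_ ?_) (not_le.2 hl)
  · intro i hi hxi
    by_contra hyi
    apply hcon
    obtain ⟨μ, m1, m2, m3, m4⟩ := single1 H M i hi
    refine ⟨μ, m1, m2, m3, by rw [m4, hxi], by rw [m4]; omega, ?_⟩
    rw [m4]
    have := abs_le.1 (hy i hi)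
    nlinarith
  · intro i hi j hj h1 h2
    by_contra h3
    apply hcon
    obtain ⟨μ, m1, m2, m3, m4, m5, m6⟩ := axisB H x y M hx hy i j hi hj h1 h2
    exact ⟨μ, m1, m2, m3, m4, by omega, by omega⟩

theorem zeroc {ι : Type*} (H : Finset ι) (x y : ι → ℤ) (l : ι → ℕ) (M : ℕ) (B : ℤ)
    (hx : ∀ i ∈ H, |x i| ≤ M) (hy : ∀ i ∈ H, |y i| ≤ M)
    (hBx : |∑ i ∈ H, (l i : ℤ) * x i| ≤ B) (hBy : |∑ i ∈ H, (l i : ℤ) * y i| ≤ B)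
    (hl : B * (1 + 2 * (M + 1) ^ 2) < ∑ i ∈ H, (l i : ℤ)) :
    ∃ μ : ι → ℕ, (∀ k, k ∉ H → μ k = 0) ∧
      (∀ k, μ k ≤ 2 * (2 * M ^ 2 + M + 1) * (2 * M + 1)) ∧ (∃ k ∈ H, 0 < μ k) ∧
      ∑ k ∈ H, (μ k : ℤ) * x k = 0 ∧ ∑ k ∈ H, (μ k : ℤ) * y k = 0 := by
  have hBy' := abs_le.1 hBy
  obtain ⟨μ, m1, m2, m3, m4, m5, m6⟩ := axis H x y l M B hx hy hBx hBy'.1 hl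
  obtain ⟨ν, n1, n2, n3, n4, n5, n6⟩ := axis H x (fun i => - y i) l M B hx
    (by simpa using hy) hBx (by simp only [mul_neg, Finset.sum_neg_distrib]; omega) hl
  simp only [mul_neg, Finset.sum_neg_distrib] at n5 n6
  set u := ∑ k ∈ H, (μ k : ℤ) * y k with hu
  set w := ∑ k ∈ H, (ν k : ℤ) * y k with hw
  rcases eq_or_lt_of_le m5 with h | h
  · exact ⟨μ, m1, fun k => (m2 k).trans (by nlinarith), m3, m4, h.symm⟩
  · have c1 : ((u.toNat : ℕ) : ℤ) = u := Int.toNat_of_nonneg h.le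
    have c2 : (((-w).toNat : ℕ) : ℤ) = - w := Int.toNat_of_nonneg (by omega)
    have d1 : u.toNat ≤ 2 * M ^ 2 + M := by zify; omega
    have d2 : (-w).toNat ≤ 2 * M ^ 2 + M := by zify; omega
    have hs : ∀ z : ι → ℤ, ∑ k ∈ H, (((-w).toNat * μ k + u.toNat * ν k : ℕ) : ℤ) * z k =
        (-w) * (∑ k ∈ H, (μ k : ℤ) * z k) + u * ∑ k ∈ H, (ν k : ℤ) * z k := by
      intro z
      rw [Finset.mul_sum, Finset.mul_sum, ← Finset.sum_add_distrib]
      refine Finset.sum_congr rfl fun k _ => ?_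
      push_cast only [Nat.cast_add, Nat.cast_mul, c1, c2]
      ring
    refine ⟨fun k => (-w).toNat * μ k + u.toNat * ν k, ?_, ?_, ?_, ?_, ?_⟩
    · intro k hk
      simp [m1 k hk, n1 k hk]
    · intro k
      have := Nat.mul_le_mul d1 (n2 k)
      have := Nat.mul_le_mul d2 (m2 k)
      nlinarith
    · obtain ⟨k, hk, hk0⟩ := n3
      refine ⟨k, hk, ?_⟩
      have : 0 < u.toNat := by omega
      positivity
    · rw [hs, m4, n4]; ring
    · rw [hs, ← hu, ← hw]; ring

theorem cone2 {ι : Type*} (H : Finset ι) (x y : ι → ℤ) (l : ι → ℕ)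
    (hX : 0 ≤ ∑ i ∈ H, (l i : ℤ) * x i) (hY : 0 ≤ ∑ i ∈ H, (l i : ℤ) * y i)
    (hne : 0 < ∑ i ∈ H, (l i : ℤ) * x i ∨ 0 < ∑ i ∈ H, (l i : ℤ) * y i) :
    (∃ i ∈ H, x i = 0 ∧ 0 < y i) ∨
    (∃ i ∈ H, ∃ j ∈ H, x i < 0 ∧ 0 < x j ∧ 0 < x j * y i - x i * y j) ∨
    (∃ i ∈ H, 0 < x i ∧ 0 ≤ y i ∧ ∀ j ∈ H, x i * y j - y i * x j ≤ 0) := by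
  by_cases hA : ∃ i ∈ H, x i = 0 ∧ 0 < y i
  · exact Or.inl hA
  push Not at hA
  by_cases hp : ∃ j ∈ H, 0 < x j
  · obtain ⟨j, hj, hxj, hmax⟩ := topslope H x y hp
    by_cases hB : ∃ i ∈ H, x i < 0 ∧ 0 < x j * y i - x i * y j
    · obtain ⟨i, hi, h1, h2⟩ := hB
      exact Or.inr (Or.inl ⟨i, hi, j, hj, h1, hxj, h2⟩)
    · push Not at hB
      right; right
      have hall : ∀ i ∈ H, x j * y i - y j * x i ≤ 0 := by
        intro i hi
        rcases lt_trichotomy (x i) 0 with h | h | h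
        · linarith [hB i hi h, mul_comm (y j) (x i)]
        · have := hA i hi h
          rw [h]; nlinarith
        · exact hmax i hi h
      refine ⟨j, hj, hxj, ?_, hall⟩
      have hs : (-y j) * ∑ i ∈ H, (l i : ℤ) * x i + x j * ∑ i ∈ H, (l i : ℤ) * y i ≤ 0 := by
        rw [← sum_lin]
        refine Finset.sum_nonpos fun i hi => ?_
        have := hall i hi
        nlinarith [Int.natCast_nonneg (l i)]
      by_contra hneg
      push Not at hneg
      rcases hne with h | h
      · nlinarith
      · nlinarith
  · push Not at hp
    exfalso
    have hterm : ∀ i ∈ H, (l i : ℤ) * x i ≤ 0 := fun i hi => by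
      have := hp i hi
      nlinarith [Int.natCast_nonneg (l i)]
    have h0 : ∑ i ∈ H, (l i : ℤ) * x i = 0 := le_antisymm (Finset.sum_nonpos hterm) hX
    have h1 := (Finset.sum_eq_zero_iff_of_nonpos hterm).1 h0
    have : ∑ i ∈ H, (l i : ℤ) * y i ≤ 0 := Finset.sum_nonpos fun i hi => by
      rcases mul_eq_zero.1 (h1 i hi) with h | h
      · rw [h]; simp
      · have := hA i hi h
        nlinarith [Int.natCast_nonneg (l i)]
    omega
end LinSets
namespace LinSets
def bY (M : ℕ) : ℕ := 2 * M ^ 2 + M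
def bT (M : ℕ) : ℕ := 2 * (2 * M ^ 2 + M + 1) * (2 * M + 1)
def bR (M n : ℕ) : ℕ := M + n * bT M * M
def bG (M n : ℕ) : ℕ := bR M n + bY M + 1
def bB (M n : ℕ) : ℕ := bG M n + bR M n
def bK (M n : ℕ) : ℕ := n * bT M + bB M n * (1 + 2 * (M + 1) ^ 2)

theorem rbound {ι : Type*} (Q : Finset ι) (x : ι → ℤ) (l : ι → ℕ) (M n T : ℕ) (b : ℤ)
    (hb : |b| ≤ M) (hn : Q.card ≤ n) (hx : ∀ i ∈ Q, |x i| ≤ M) (hl : ∀ i ∈ Q, l i ≤ T) :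
    |b + ∑ i ∈ Q, (l i : ℤ) * x i| ≤ ((M + n * T * M : ℕ) : ℤ) := by
  have h1 : |∑ i ∈ Q, (l i : ℤ) * x i| ≤ ∑ i ∈ Q, ((T * M : ℕ) : ℤ) := by
    refine (Finset.abs_sum_le_sum_abs _ _).trans (Finset.sum_le_sum fun i hi => ?_)
    rw [abs_mul, Nat.abs_cast]
    push_cast
    exact mul_le_mul (by exact_mod_cast hl i hi) (hx i hi) (abs_nonneg _) (by positivity)
  rw [Finset.sum_const, nsmul_eq_mul] at h1
  have h2 : ((Q.card : ℕ) : ℤ) * ((T * M : ℕ) : ℤ) ≤ (n : ℤ) * ((T * M : ℕ) : ℤ) := by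
    have : (Q.card : ℤ) ≤ n := by exact_mod_cast hn
    exact mul_le_mul_of_nonneg_right this (by positivity)
  have h3 := abs_add_le b (∑ i ∈ Q, (l i : ℤ) * x i)
  push_cast at *
  nlinarith

theorem core {ι : Type*} (P : Finset ι) (x y : ι → ℤ) (l : ι → ℕ) (M n : ℕ) (b d : ℤ)
    (hb : |b| ≤ M) (hd : |d| ≤ M) (hn : P.card ≤ n)
    (hx : ∀ i ∈ P, |x i| ≤ M) (hy : ∀ i ∈ P, |y i| ≤ M)
    (hvx : 0 ≤ b + ∑ i ∈ P, (l i : ℤ) * x i) (hvy : 0 ≤ d + ∑ i ∈ P, (l i : ℤ) * y i)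
    (hl : bK M n < ∑ i ∈ P, l i) :
    ∃ μ : ι → ℕ, (∀ k ∈ P, μ k ≤ l k) ∧ (∀ k, μ k ≤ bT M) ∧ (∃ k ∈ P, 0 < μ k) ∧
      0 ≤ ∑ k ∈ P, (μ k : ℤ) * x k ∧ 0 ≤ ∑ k ∈ P, (μ k : ℤ) * y k ∧
      ∑ k ∈ P, (μ k : ℤ) * x k ≤ bY M ∧ ∑ k ∈ P, (μ k : ℤ) * y k ≤ bY M ∧
      ∑ k ∈ P, (μ k : ℤ) * x k ≤ b + ∑ i ∈ P, (l i : ℤ) * x i ∧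
      ∑ k ∈ P, (μ k : ℤ) * y k ≤ d + ∑ i ∈ P, (l i : ℤ) * y i := by
  classical
  set H := P.filter (fun i => bT M ≤ l i) with hH
  set Q := P.filter (fun i => ¬ bT M ≤ l i) with hQ
  have hHP : H ⊆ P := Finset.filter_subset _ _
  have hQP : Q ⊆ P := Finset.filter_subset _ _
  have split : ∀ z : ι → ℤ, ∑ i ∈ P, (l i : ℤ) * z i =
      ∑ i ∈ H, (l i : ℤ) * z i + ∑ i ∈ Q, (l i : ℤ) * z i := fun z =>
    (Finset.sum_filter_add_sum_filter_not P _ _).symm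
  have hQl : ∀ i ∈ Q, l i ≤ bT M := fun i hi => by
    have := (Finset.mem_filter.1 hi).2; omega
  have hQn : Q.card ≤ n := (Finset.card_le_card hQP).trans hn
  have hRx := rbound Q x l M n (bT M) b hb hQn (fun i hi => hx i (hQP hi)) hQl
  have hRy := rbound Q y l M n (bT M) d hd hQn (fun i hi => hy i (hQP hi)) hQl
  change _ ≤ ((bR M n : ℕ) : ℤ) at hRx hRy
  rw [abs_le] at hRx hRy
  have hHs : ((bB M n : ℕ) : ℤ) * (1 + 2 * ((M : ℤ) + 1) ^ 2) < ∑ i ∈ H, (l i : ℤ) := by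
    have h1 : ∑ i ∈ P, l i = ∑ i ∈ H, l i + ∑ i ∈ Q, l i :=
      (Finset.sum_filter_add_sum_filter_not P _ _).symm
    have h2 : ∑ i ∈ Q, l i ≤ n * bT M := by
      refine (Finset.sum_le_card_nsmul Q _ _ hQl).trans ?_
      rw [smul_eq_mul]; exact Nat.mul_le_mul_right _ hQn
    have h3 : bB M n * (1 + 2 * (M + 1) ^ 2) < ∑ i ∈ H, l i := by
      unfold bK at hl; omega
    exact_mod_cast h3
  have hHx : ∀ i ∈ H, |x i| ≤ M := fun i hi => hx i (hHP hi)
  have hHy : ∀ i ∈ H, |y i| ≤ M := fun i hi => hy i (hHP hi)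
  have finish : (∃ μ : ι → ℕ, (∀ k, k ∉ H → μ k = 0) ∧ (∀ k, μ k ≤ bT M) ∧ (∃ k ∈ H, 0 < μ k) ∧
      0 ≤ ∑ k ∈ H, (μ k : ℤ) * x k ∧ 0 ≤ ∑ k ∈ H, (μ k : ℤ) * y k ∧
      ∑ k ∈ H, (μ k : ℤ) * x k ≤ bY M ∧ ∑ k ∈ H, (μ k : ℤ) * y k ≤ bY M ∧
      ∑ k ∈ H, (μ k : ℤ) * x k ≤ b + ∑ i ∈ P, (l i : ℤ) * x i ∧
      ∑ k ∈ H, (μ k : ℤ) * y k ≤ d + ∑ i ∈ P, (l i : ℤ) * y i) → 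
      ∃ μ : ι → ℕ, (∀ k ∈ P, μ k ≤ l k) ∧ (∀ k, μ k ≤ bT M) ∧ (∃ k ∈ P, 0 < μ k) ∧
      0 ≤ ∑ k ∈ P, (μ k : ℤ) * x k ∧ 0 ≤ ∑ k ∈ P, (μ k : ℤ) * y k ∧
      ∑ k ∈ P, (μ k : ℤ) * x k ≤ bY M ∧ ∑ k ∈ P, (μ k : ℤ) * y k ≤ bY M ∧
      ∑ k ∈ P, (μ k : ℤ) * x k ≤ b + ∑ i ∈ P, (l i : ℤ) * x i ∧
      ∑ k ∈ P, (μ k : ℤ) * y k ≤ d + ∑ i ∈ P, (l i : ℤ) * y i := by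
    rintro ⟨μ, m1, m2, ⟨k, hk, hk0⟩, m4⟩
    have e : ∀ z : ι → ℤ, ∑ i ∈ H, (μ i : ℤ) * z i = ∑ i ∈ P, (μ i : ℤ) * z i := fun z =>
      Finset.sum_subset hHP fun i _ hi => by simp [m1 i hi]
    rw [e, e] at m4
    refine ⟨μ, ?_, m2, ⟨k, hHP hk, hk0⟩, m4⟩
    intro i hi
    by_cases hiH : i ∈ H
    · exact (m2 i).trans (Finset.mem_filter.1 hiH).2
    · rw [m1 i hiH]; exact Nat.zero_le _
  have hT1 : 2 * M + 1 ≤ bT M := by unfold bT; nlinarith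
  have sx := split x
  have sy := split y
  have hG : (bG M n : ℤ) = bR M n + bY M + 1 := by simp [bG]
  have hB : (bB M n : ℤ) = bG M n + bR M n := by simp [bB]
  have hYe : (bY M : ℤ) = 2 * M ^ 2 + M := by simp [bY]
  set vx := b + ∑ i ∈ P, (l i : ℤ) * x i with hvxd
  set vy := d + ∑ i ∈ P, (l i : ℤ) * y i with hvyd
  have hR0 : (0:ℤ) ≤ bR M n := by positivity
  have hY0 : (0:ℤ) ≤ bY M := by positivity
  have zeroFin : vx ≤ bG M n → vy ≤ bG M n → _ := fun h1 h2 => 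
    zeroc H x y l M (bB M n) hHx hHy (abs_le.2 ⟨by omega, by omega⟩)
      (abs_le.2 ⟨by omega, by omega⟩) hHs
  apply finish
  by_cases h1 : vx < bG M n
  · by_cases h2 : vy < bY M
    · obtain ⟨μ, m1, m2, m3, m4, m5⟩ := zeroFin (by omega) (by omega)
      exact ⟨μ, m1, m2, m3, by omega, by omega, by omega, by omega, by omega, by omega⟩
    · obtain ⟨μ, m1, m2, m3, m4, m5, m6⟩ := axis H x y l M (bB M n) hHx hHy
        (abs_le.2 ⟨by omega, by omega⟩) (by omega) hHs
      exact ⟨μ, m1, fun k => (m2 k).trans hT1, m3, by omega, by omega, by omega, by omega,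
        by omega, by omega⟩
  · by_cases h2 : vy < bG M n
    · obtain ⟨μ, m1, m2, m3, m4, m5, m6⟩ := axis H y x l M (bB M n) hHy hHx
        (abs_le.2 ⟨by omega, by omega⟩) (by omega) hHs
      exact ⟨μ, m1, fun k => (m2 k).trans hT1, m3, by omega, by omega, by omega, by omega,
        by omega, by omega⟩
    · rcases cone2 H x y l (by omega) (by omega) (by omega) with ⟨i, hi, hxi, hyi⟩ | ⟨i, hi, j, hj, h3, h4, h5⟩ | ⟨i, hi, h3, h4, -⟩
      · obtain ⟨μ, m1, m2, m3, m4⟩ := single1 H M i hi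
        have := abs_le.1 (hHy i hi)
        have hMY : (M : ℤ) ≤ bY M := by rw [hYe]; nlinarith
        refine ⟨μ, m1, fun k => (m2 k).trans hT1, m3, ?_⟩
        rw [m4, m4]; omega
      · obtain ⟨μ, m1, m2, m3, m4, m5, m6⟩ := axisB H x y M hHx hHy i j hi hj h3 h4
        refine ⟨μ, m1, fun k => (m2 k).trans hT1, m3, ?_⟩
        rw [m4, m5]; omega
      · obtain ⟨μ, m1, m2, m3, m4⟩ := single1 H M i hi
        have := abs_le.1 (hHy i hi)
        have := abs_le.1 (hHx i hi)
        have hMY : (M : ℤ) ≤ bY M := by rw [hYe]; nlinarith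
        refine ⟨μ, m1, fun k => (m2 k).trans hT1, m3, ?_⟩
        rw [m4, m4]; omega
end LinSets
namespace LinSets

def S (P : Finset Vec2) (l : Vec2 → ℕ) : Vec2 := ∑ p ∈ P, (l p : ℤ) • p

def Cn (P : Finset Vec2) (w : Vec2) : Prop := ∃ l : Vec2 → ℕ, w = S P l

theorem S_add (P : Finset Vec2) (l m : Vec2 → ℕ) : S P (fun p => l p + m p) = S P l + S P m := by
  simp [S, add_smul, Finset.sum_add_distrib]

theorem S_map (P : Finset Vec2) (l : Vec2 → ℕ) (x : Vec2 →ₗ[ℤ] ℤ) :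
    x (S P l) = ∑ p ∈ P, (l p : ℤ) * x p := by
  simp only [S, map_sum, map_smul, smul_eq_mul]

theorem Cn.zero (P : Finset Vec2) : Cn P 0 := ⟨fun _ => 0, by simp [S]⟩

theorem Cn.add {P : Finset Vec2} {v w : Vec2} (hv : Cn P v) (hw : Cn P w) : Cn P (v + w) := by
  obtain ⟨l, rfl⟩ := hv
  obtain ⟨m, rfl⟩ := hw
  exact ⟨_, (S_add P l m).symm⟩

theorem Cn.nsmul {P : Finset Vec2} {v : Vec2} (hv : Cn P v) (k : ℕ) : Cn P ((k : ℤ) • v) := by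
  obtain ⟨l, rfl⟩ := hv
  refine ⟨fun p => k * l p, ?_⟩
  simp [S, Finset.smul_sum, mul_smul]

theorem Cn.zsmul {P : Finset Vec2} {v : Vec2} (hv : Cn P v) (k : ℤ) (hk : 0 ≤ k) :
    Cn P (k • v) := by
  obtain ⟨k, rfl⟩ := Int.eq_ofNat_of_zero_le hk
  exact hv.nsmul k

theorem Cn.of_mem {P : Finset Vec2} {p : Vec2} (hp : p ∈ P) : Cn P p := by
  classical
  refine ⟨fun q => if q = p then 1 else 0, ?_⟩
  simp [S, hp]

theorem Cn.sum {P Q : Finset Vec2} (l : Vec2 → ℕ) (h : ∀ q ∈ Q, Cn P q) :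
    Cn P (S Q l) := by
  unfold S
  classical
  induction Q using Finset.induction_on with
  | empty => simpa using Cn.zero P
  | insert a s ha ih =>
    rw [Finset.sum_insert ha]
    exact ((h a (by simp)).nsmul _).add (ih fun q hq => h q (by simp [hq]))

theorem lin_iff (b : Vec2) (P : Finset Vec2) (v : Vec2) :
    v ∈ LinSet b P ↔ ∃ w, Cn P w ∧ v = b + w := by
  constructor
  · rintro ⟨l, rfl⟩
    exact ⟨_, ⟨l, rfl⟩, rfl⟩
  · rintro ⟨w, ⟨l, rfl⟩, rfl⟩
    exact ⟨l, rfl⟩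

theorem coneLe_sum (P G : Finset Vec2) (T : ℕ) (hG : ∀ g ∈ G, g ∈ ConeLe T P) (r : Vec2 → ℕ) :
    ∃ l : Vec2 → ℕ, (∀ p ∈ P, l p ≤ (∑ g ∈ G, r g) * T) ∧ S G r = S P l := by
  have : ∀ g : Vec2, ∃ l : Vec2 → ℕ, g ∈ G → ((∀ p ∈ P, l p ≤ T) ∧ g = ∑ p ∈ P, (l p : ℤ) • p) := by
    intro g
    by_cases hg : g ∈ G
    · obtain ⟨l, h⟩ := hG g hg
      exact ⟨l, fun _ => h⟩
    · exact ⟨fun _ => 0, fun h => absurd h hg⟩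
  choose rep hrep using this
  refine ⟨fun p => ∑ g ∈ G, r g * rep g p, ?_, ?_⟩
  · intro p hp
    rw [Finset.sum_mul]
    exact Finset.sum_le_sum fun g hg => Nat.mul_le_mul_left _ ((hrep g hg).1 p hp)
  · unfold S
    calc ∑ g ∈ G, (r g : ℤ) • g = ∑ g ∈ G, (r g : ℤ) • ∑ p ∈ P, (rep g p : ℤ) • p :=
          Finset.sum_congr rfl fun g hg => by rw [← (hrep g hg).2]
      _ = _ := by
        simp only [Finset.smul_sum, smul_smul]
        rw [Finset.sum_comm]
        refine Finset.sum_congr rfl fun p _ => ?_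
        push_cast
        rw [Finset.sum_smul]

noncomputable def box (N : ℕ) : Finset Vec2 := Fintype.piFinset fun _ => Finset.Icc (-(N : ℤ)) N

theorem box_card (N : ℕ) : (box N).card = (2 * N + 1) ^ 2 := by
  simp only [box, Fintype.card_piFinset_const, Int.card_Icc]
  congr 1
  omega

structure Setup (b : Vec2) (P : Finset Vec2) (M : ℕ) (x y : Vec2 →ₗ[ℤ] ℤ) : Prop where
  hb : b ∈ P
  hx : ∀ p ∈ P, |x p| ≤ M
  hy : ∀ p ∈ P, |y p| ≤ M
  hn : P.card ≤ (2 * M + 1) ^ 2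
  hinj : ∀ u v, x u = x v → y u = y v → u = v
  hbox : ∀ (N : ℕ) v, |x v| ≤ N → |y v| ≤ N → v ∈ box N

open Classical in
noncomputable def GG (P : Finset Vec2) (M : ℕ) (x y : Vec2 →ₗ[ℤ] ℤ) : Finset Vec2 :=
  (box (bY M)).filter fun g => g ∈ ConeLe (bT M) P ∧ 0 ≤ x g ∧ 0 ≤ y g ∧ g ≠ 0

def bK' (M : ℕ) : ℕ := bK M ((2 * M + 1) ^ 2)

theorem step1 {b : Vec2} {P : Finset Vec2} {M : ℕ} {x y : Vec2 →ₗ[ℤ] ℤ} (h : Setup b P M x y)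
    (k : ℕ) : ∀ l : Vec2 → ℕ, ∑ p ∈ P, l p ≤ k → 0 ≤ x (b + S P l) → 0 ≤ y (b + S P l) →
    ∃ ν : Vec2 → ℕ, (∀ p ∈ P, ν p ≤ bK' M) ∧ 0 ≤ x (b + S P ν) ∧ 0 ≤ y (b + S P ν) ∧
    ∃ m : Vec2 → ℕ, b + S P l = b + S P ν + S (GG P M x y) m := by
  classical
  induction k with
  | zero =>
    intro l hl hx hy
    refine ⟨l, fun p hp => ?_, hx, hy, fun _ => 0, by simp [S]⟩
    have := Finset.single_le_sum (f := l) (fun _ _ => Nat.zero_le _) hp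
    omega
  | succ k ih =>
    intro l hl hx hy
    by_cases hK : ∑ p ∈ P, l p ≤ bK' M
    · refine ⟨l, fun p hp => ?_, hx, hy, fun _ => 0, by simp [S]⟩
      have := Finset.single_le_sum (f := l) (fun _ _ => Nat.zero_le _) hp
      omega
    · have hx' := hx
      have hy' := hy
      rw [map_add, S_map] at hx' hy'
      obtain ⟨μ, m1, m2, ⟨p0, hp0, hp0'⟩, m4, m5, m6, m7, m8, m9⟩ :=
        core P x y l M _ (x b) (y b) (h.hx b h.hb) (h.hy b h.hb) h.hn h.hx h.hy hx' hy'
          (not_le.1 hK)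
      simp only [← S_map, ← map_add] at m4 m5 m6 m7 m8 m9
      have hsub : S P l = S P (fun p => l p - μ p) + S P μ := by
        rw [← S_add]
        exact Finset.sum_congr rfl fun p hp => by
          have := m1 p hp
          simp only [Nat.sub_add_cancel this]
      have hlt : ∑ p ∈ P, (l p - μ p) < ∑ p ∈ P, l p := by
        refine Finset.sum_lt_sum (fun p hp => Nat.sub_le _ _) ⟨p0, hp0, ?_⟩
        have := m1 p0 hp0
        omega
      rw [hsub, ← add_assoc, map_add] at m8 m9
      obtain ⟨ν, n1, n2, n3, m, n4⟩ := ih (fun p => l p - μ p) (by omega) (by omega) (by omega)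
      by_cases hz : S P μ = 0
      · exact ⟨ν, n1, n2, n3, m, by rw [hsub, hz, add_zero, n4]⟩
      · have hg : S P μ ∈ GG P M x y := by
          simp only [GG, Finset.mem_filter]
          refine ⟨h.hbox _ _ ?_ ?_, ⟨μ, fun p _ => m2 p, rfl⟩, m4, m5, hz⟩
          · rwa [abs_of_nonneg m4]
          · rwa [abs_of_nonneg m5]
        refine ⟨ν, n1, n2, n3, fun g => m g + (if g = S P μ then 1 else 0), ?_⟩
        rw [S_add, ← add_assoc, ← n4, hsub, ← add_assoc]
        congr 1
        have : S (GG P M x y) (fun g => if g = S P μ then 1 else 0) = S P μ := by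
          rw [S]; simp [hg]
        rw [this]

def bN (M : ℕ) : ℕ := (2 * M ^ 2 + 1) * (2 * M ^ 2 + M) + 2 * M ^ 2 + M

theorem Lb {b : Vec2} {P : Finset Vec2} : b ∈ LinSet b P :=
  (lin_iff _ _ _).2 ⟨0, Cn.zero P, by simp⟩

theorem Ladd {b : Vec2} {P : Finset Vec2} {v w : Vec2} (hv : v ∈ LinSet b P) (hw : Cn P w) :
    v + w ∈ LinSet b P := by
  obtain ⟨u, hu, rfl⟩ := (lin_iff _ _ _).1 hv
  exact (lin_iff _ _ _).2 ⟨u + w, hu.add hw, by rw [add_assoc]⟩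

theorem cn_of_lin {b : Vec2} {P : Finset Vec2} (hb : b ∈ P) {v : Vec2} (hv : v ∈ LinSet b P) :
    Cn P v := by
  obtain ⟨u, hu, rfl⟩ := (lin_iff _ _ _).1 hv
  exact (Cn.of_mem hb).add hu

theorem qex {b : Vec2} {P : Finset Vec2} {M : ℕ} {x y : Vec2 →ₗ[ℤ] ℤ} (hb : b ∈ P)
    (hx : ∀ p ∈ P, |x p| ≤ M) (hy : ∀ p ∈ P, |y p| ≤ M)
    (g : Vec2) (hg : Cn P g) (hgx : 0 ≤ x g) (hgy : 0 ≤ y g) (hg0 : 0 < x g ∨ 0 < y g) :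
    ∃ q, (q ∈ P ∨ q ∈ LinSet b P) ∧ 0 ≤ x q ∧ 0 ≤ y q ∧ x q ≤ bN M ∧ y q ≤ bN M ∧
      (0 < x q ∨ 0 < y q) ∧
      ∀ g, Cn P g → 0 ≤ x g → 0 ≤ y g → x q * y g - y q * x g ≤ 0 := by
  obtain ⟨l, rfl⟩ := hg
  rw [S_map] at hgx hgy hg0
  rw [S_map] at hg0
  have hMN : (M : ℤ) ≤ bN M := by
    have : M ≤ bN M := by unfold bN; omega
    exact_mod_cast this
  rcases cone2 P x y l hgx hgy hg0 with ⟨i, hi, hxi, hyi⟩ | ⟨i, hi, j, hj, h3, h4, h5⟩ | ⟨i, hi, h3, h4, h5⟩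
  · have := abs_le.1 (hy i hi)
    refine ⟨i, Or.inl hi, by omega, by omega, by omega, by omega, Or.inr hyi, ?_⟩
    intro g _ h1 h2
    rw [hxi]; nlinarith
  · have key : ∀ q, q ∈ LinSet b P → x q = 0 → 0 < y q → y q ≤ bN M → 
        ∃ q, (q ∈ P ∨ q ∈ LinSet b P) ∧ 0 ≤ x q ∧ 0 ≤ y q ∧ x q ≤ bN M ∧ y q ≤ bN M ∧
        (0 < x q ∨ 0 < y q) ∧
        ∀ g, Cn P g → 0 ≤ x g → 0 ≤ y g → x q * y g - y q * x g ≤ 0 := by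
      intro q hq h1 h2 h3
      refine ⟨q, Or.inr hq, by omega, by omega, by omega, by omega, Or.inr h2, ?_⟩
      intro g _ h4 h5
      rw [h1]; nlinarith
    obtain ⟨-, -, -, -, -, -, h6⟩ := axisB P x y M hx hy i j hi hj h3 h4
    set d := x j * y i - x i * y j with hd
    have pr : ∀ u v : ℤ, |u| ≤ M → |v| ≤ M → |u * v| ≤ (M : ℤ) ^ 2 := by
      intro u v hu hv
      rw [abs_mul, sq]
      exact mul_le_mul hu hv (abs_nonneg _) (by positivity)
    have hNe : (bN M : ℤ) = (2 * M ^ 2 + 1) * (2 * M ^ 2 + M) + 2 * M ^ 2 + M := by simp [bN]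
    have hM2 : (0:ℤ) ≤ (M:ℤ) ^ 2 := by positivity
    have hM0 : (0:ℤ) ≤ (M:ℤ) := by positivity
    by_cases hs : 0 ≤ x b
    · have e1 := abs_le.1 (pr _ _ (hx i hi) (hy b hb))
      have e2 := abs_le.1 (pr _ _ (hx b hb) (hy i hi))
      have hyq : y (b + ((- x i - 1) • b + ((x b + (2 * M ^ 2 + 1) * x j) • i +
          ((2 * M ^ 2 + 1) * (- x i)) • j))) =
          - (x i * y b) + x b * y i + (2 * M ^ 2 + 1) * d := by
        simp only [map_add, map_smul, smul_eq_mul]; ring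
      refine key (b + ((- x i - 1) • b + ((x b + (2 * M ^ 2 + 1) * x j) • i +
          ((2 * M ^ 2 + 1) * (- x i)) • j))) ?_ ?_ ?_ ?_
      · refine Ladd Lb (((Cn.of_mem hb).zsmul _ (by omega)).add
          (((Cn.of_mem hi).zsmul _ (by positivity)).add ((Cn.of_mem hj).zsmul _ ?_)))
        exact mul_nonneg (by positivity) (by omega)
      · simp only [map_add, map_smul, smul_eq_mul]; ring
      · rw [hyq]; nlinarith
      · rw [hyq, hNe]; nlinarith
    · have e1 := abs_le.1 (pr _ _ (hx j hj) (hy b hb))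
      have e2 := abs_le.1 (pr _ _ (hx b hb) (hy j hj))
      have hyq : y (b + ((x j - 1) • b + (((2 * M ^ 2 + 1) * x j) • i +
          (- x b + (2 * M ^ 2 + 1) * (- x i)) • j))) =
          (x j * y b) - x b * y j + (2 * M ^ 2 + 1) * d := by
        simp only [map_add, map_smul, smul_eq_mul]; ring
      refine key (b + ((x j - 1) • b + (((2 * M ^ 2 + 1) * x j) • i +
          (- x b + (2 * M ^ 2 + 1) * (- x i)) • j))) ?_ ?_ ?_ ?_
      · refine Ladd Lb (((Cn.of_mem hb).zsmul _ (by omega)).add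
          (((Cn.of_mem hi).zsmul _ (by positivity)).add ((Cn.of_mem hj).zsmul _ ?_)))
        exact add_nonneg (by omega) (mul_nonneg (by positivity) (by omega))
      · simp only [map_add, map_smul, smul_eq_mul]; ring
      · rw [hyq]; nlinarith
      · rw [hyq, hNe]; nlinarith
  · have := abs_le.1 (hy i hi)
    have := abs_le.1 (hx i hi)
    refine ⟨i, Or.inl hi, by omega, by omega, by omega, by omega, Or.inl h3, ?_⟩
    rintro g ⟨l, rfl⟩ h1 h2
    have hs : (-y i) * ∑ k ∈ P, (l k : ℤ) * x k + x i * ∑ k ∈ P, (l k : ℤ) * y k ≤ 0 := by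
      rw [← sum_lin]
      refine Finset.sum_nonpos fun k hk => ?_
      have := h5 k hk
      nlinarith [Int.natCast_nonneg (l k)]
    rw [← S_map, ← S_map] at hs
    linarith

def bD (M : ℕ) : ℕ := 2 * bN M ^ 2 + 2 * bN M

theorem dlem {P : Finset Vec2} {N : ℕ} {x y : Vec2 →ₗ[ℤ] ℤ}
    (hinj : ∀ u v, x u = x v → y u = y v → u = v) (q r : Vec2) (hr : Cn P r)
    (qx : 0 ≤ x q) (qy : 0 ≤ y q) (qxN : x q ≤ N) (qyN : y q ≤ N) (q0 : 0 < x q ∨ 0 < y q)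
    (rx : 0 ≤ x r) (ry : 0 ≤ y r) (rxN : x r ≤ N) (ryN : y r ≤ N) (r0 : 0 < x r ∨ 0 < y r)
    (hq : ∀ g, Cn P g → 0 ≤ x g → 0 ≤ y g → x q * y g - y q * x g ≤ 0)
    (hrr : ∀ g, Cn P g → 0 ≤ x g → 0 ≤ y g → y r * x g - x r * y g ≤ 0) :
    ∃ D : ℕ, 1 ≤ D ∧ D ≤ 2 * N ^ 2 + 2 * N ∧ ∀ g, Cn P g → 0 ≤ x g → 0 ≤ y g →
      ∃ a c : ℕ, (D : ℤ) • g = (a : ℤ) • q + (c : ℤ) • r := by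
  have hqr := hq r hr rx ry
  have main : ∃ D : ℤ, 1 ≤ D ∧ D ≤ 2 * N ^ 2 + 2 * N ∧ ∀ g, Cn P g → 0 ≤ x g → 0 ≤ y g →
      ∃ a c : ℤ, 0 ≤ a ∧ 0 ≤ c ∧ D • g = a • q + c • r := by
    have hN2 : (0:ℤ) ≤ (N:ℤ) ^ 2 := by positivity
    have hN0 : (0:ℤ) ≤ (N:ℤ) := by positivity
    rcases lt_or_eq_of_le hqr with h | h
    · refine ⟨y q * x r - x q * y r, by omega, by nlinarith, fun g hg gx gy => 
        ⟨x r * y g - y r * x g, y q * x g - x q * y g, by linarith [hrr g hg gx gy],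
          by linarith [hq g hg gx gy], ?_⟩⟩
      apply hinj <;> simp only [map_add, map_smul, smul_eq_mul] <;> ring
    · refine ⟨x q + y q, by omega, by nlinarith, fun g hg gx gy => ⟨x g + y g, 0, by omega, le_rfl, ?_⟩⟩
      have h1 := hq g hg gx gy
      have h2 := hrr g hg gx gy
      have h3 : x q * y g = y q * x g := by
        rcases lt_or_eq_of_le qx with h' | h'
        · have xr : 0 < x r := by
            rcases lt_or_eq_of_le rx with h'' | h''
            · exact h''
            · exfalso
              have : 0 < y r := by omega
              rw [← h''] at h
              nlinarith
          have : x r * (y q * x g) ≤ x r * (x q * y g) := by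
            have : x q * y r = y q * x r := by linarith
            calc x r * (y q * x g) = (y q * x r) * x g := by ring
              _ = x q * (y r * x g) := by rw [← this]; ring
              _ ≤ x q * (x r * y g) := by nlinarith
              _ = _ := by ring
          have := le_of_mul_le_mul_left this xr
          linarith
        · have yq : 0 < y q := by omega
          rw [← h'] at h
          have xr : x r = 0 := by
            have : y q * x r = 0 := by linarith
            rcases mul_eq_zero.1 this with h | h <;> omega
          have yr : 0 < y r := by omega
          rw [xr] at h2
          have : x g = 0 := by nlinarith
          rw [← h', this]; ring
      apply hinj <;> simp only [map_add, map_smul, smul_eq_mul] <;> linarith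
  obtain ⟨D, h1, h2, h3⟩ := main
  obtain ⟨D, rfl⟩ := Int.eq_ofNat_of_zero_le (show 0 ≤ D by omega)
  refine ⟨D, by omega, by exact_mod_cast h2, fun g hg gx gy => ?_⟩
  obtain ⟨a, c, ha, hc, e⟩ := h3 g hg gx gy
  obtain ⟨a, rfl⟩ := Int.eq_ofNat_of_zero_le ha
  obtain ⟨c, rfl⟩ := Int.eq_ofNat_of_zero_le hc
  exact ⟨a, c, e⟩
end LinSets
namespace LinSets

def bE (M : ℕ) : ℕ := bK' M + ((2 * bY M + 1) ^ 2 * bD M + 2 * bN M) * bT M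

theorem GG_mem {P : Finset Vec2} {M : ℕ} {x y : Vec2 →ₗ[ℤ] ℤ} {g : Vec2}
    (hg : g ∈ GG P M x y) : g ∈ ConeLe (bT M) P ∧ 0 ≤ x g ∧ 0 ≤ y g ∧ g ≠ 0 := by
  classical
  exact (Finset.mem_filter.1 hg).2

theorem GG_card {P : Finset Vec2} {M : ℕ} {x y : Vec2 →ₗ[ℤ] ℤ} :
    (GG P M x y).card ≤ (2 * bY M + 1) ^ 2 := by
  classical
  rw [← box_card]
  exact Finset.card_filter_le _ _

theorem Setup.pos {b : Vec2} {P : Finset Vec2} {M : ℕ} {x y : Vec2 →ₗ[ℤ] ℤ} (h : Setup b P M x y)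
    {g : Vec2} (hx : 0 ≤ x g) (hy : 0 ≤ y g) (h0 : g ≠ 0) : 0 < x g ∨ 0 < y g := by
  by_contra hc
  push Not at hc
  exact h0 (h.hinj g 0 (by rw [map_zero]; omega) (by rw [map_zero]; omega))

theorem small {b : Vec2} {P : Finset Vec2} {M : ℕ} {x y : Vec2 →ₗ[ℤ] ℤ} (h : Setup b P M x y)
    {q : Vec2} (hq : q ∈ LinSet b P) (qx : 0 ≤ x q) (qy : 0 ≤ y q)
    (qxN : x q ≤ bN M) (qyN : y q ≤ bN M) :
    ∃ ν : Vec2 → ℕ, (∀ p ∈ P, ν p ≤ bE M) ∧ q = b + S P ν := by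
  obtain ⟨l, rfl⟩ := hq
  change 0 ≤ x (b + S P l) at qx
  change 0 ≤ y (b + S P l) at qy
  change x (b + S P l) ≤ _ at qxN
  change y (b + S P l) ≤ _ at qyN
  obtain ⟨ν, n1, n2, n3, m, n4⟩ := step1 h _ l le_rfl qx qy
  obtain ⟨μ, m1, m2⟩ := coneLe_sum P (GG P M x y) (bT M) (fun g hg => (GG_mem hg).1) m
  have hm : ∑ g ∈ GG P M x y, m g ≤ 2 * bN M := by
    have : (∑ g ∈ GG P M x y, (m g : ℤ)) ≤ x (S (GG P M x y) m) + y (S (GG P M x y) m) := by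
      rw [S_map, S_map, ← Finset.sum_add_distrib]
      refine Finset.sum_le_sum fun g hg => ?_
      obtain ⟨-, h1, h2, h3⟩ := GG_mem hg
      have := h.pos h1 h2 h3
      have : 1 ≤ x g + y g := by omega
      nlinarith [Int.natCast_nonneg (m g)]
    rw [n4, map_add] at qxN qyN
    zify
    omega
  refine ⟨fun p => ν p + μ p, fun p hp => ?_, ?_⟩
  · have h1 := n1 p hp
    have h2 := (m1 p hp).trans (Nat.mul_le_mul_right (bT M) hm)
    unfold bE
    nlinarith [Nat.zero_le ((2 * bY M + 1) ^ 2 * bD M * bT M)]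
  · rw [S_add, ← m2, ← add_assoc, ← n4]; rfl

theorem bN_bD {M D : ℕ} (h : D ≤ 2 * bN M ^ 2 + 2 * bN M) : D ≤ bD M := h

theorem mainQ {b : Vec2} {P : Finset Vec2} {M : ℕ} {x y : Vec2 →ₗ[ℤ] ℤ} (h : Setup b P M x y) :
    ∃ Q : Finset Vec2, Q.card ≤ 2 ∧
      (∀ q ∈ Q, (q ∈ P ∨ q ∈ LinSet b P) ∧ 0 ≤ x q ∧ 0 ≤ y q ∧
        (q ∈ LinSet b P → ∃ ν : Vec2 → ℕ, (∀ p ∈ P, ν p ≤ bE M) ∧ q = b + S P ν)) ∧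
      ∀ v ∈ LinSet b P, 0 ≤ x v → 0 ≤ y v → ∃ ν : Vec2 → ℕ, (∀ p ∈ P, ν p ≤ bE M) ∧
        0 ≤ x (b + S P ν) ∧ 0 ≤ y (b + S P ν) ∧ v ∈ LinSet (b + S P ν) Q := by
  classical
  have hKE : bK' M ≤ bE M := by unfold bE; omega
  by_cases hG : GG P M x y = ∅
  · refine ⟨∅, by simp, by simp, ?_⟩
    rintro v ⟨l, rfl⟩ vx vy
    obtain ⟨ν, n1, n2, n3, m, n4⟩ := step1 h _ l le_rfl vx vy
    refine ⟨ν, fun p hp => (n1 p hp).trans hKE, n2, n3, ?_⟩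
    rw [hG] at n4
    change b + S P l ∈ _
    rw [n4]
    exact ⟨m, rfl⟩
  · obtain ⟨g0, hg0⟩ := Finset.nonempty_iff_ne_empty.2 hG
    have hcn : ∀ g ∈ GG P M x y, Cn P g := fun g hg => by
      obtain ⟨l, -, hl⟩ := (GG_mem hg).1
      exact ⟨l, hl⟩
    obtain ⟨-, g1, g2, g3⟩ := GG_mem hg0
    have gp := h.pos g1 g2 g3
    obtain ⟨q, hq, qx, qy, qxN, qyN, q0, hqd⟩ := qex h.hb h.hx h.hy g0 (hcn g0 hg0) g1 g2 gp
    obtain ⟨r, hr, ry, rx, ryN, rxN, r0, hrd⟩ := qex h.hb h.hy h.hx g0 (hcn g0 hg0) g2 g1 gp.symm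
    have hrc : Cn P r := hr.elim Cn.of_mem (cn_of_lin h.hb)
    obtain ⟨D, D1, D2, hD⟩ := dlem h.hinj q r hrc qx qy qxN qyN q0 rx ry rxN ryN r0.symm hqd
      (fun g a b c => hrd g a c b)
    have D2 := bN_bD D2
    refine ⟨{q, r}, Finset.card_le_two, ?_, ?_⟩
    · intro z hz
      rw [Finset.mem_insert, Finset.mem_singleton] at hz
      rcases hz with rfl | rfl
      · exact ⟨hq, qx, qy, fun hl => small h hl qx qy qxN qyN⟩
      · exact ⟨hr, rx, ry, fun hl => small h hl rx ry rxN ryN⟩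
    · rintro v ⟨l, rfl⟩ vx vy
      obtain ⟨ν, n1, n2, n3, m, n4⟩ := step1 h _ l le_rfl vx vy
      set G := GG P M x y with hGdef
      obtain ⟨μ, m1, m2⟩ := coneLe_sum P G (bT M) (fun g hg => (GG_mem hg).1) (fun g => m g % D)
      have hsum : ∑ g ∈ G, m g % D ≤ (2 * bY M + 1) ^ 2 * bD M := by
        refine (Finset.sum_le_card_nsmul G _ (bD M) fun g _ => ?_).trans ?_
        · exact (Nat.mod_lt _ (by omega)).le.trans D2
        · rw [smul_eq_mul]
          exact Nat.mul_le_mul_right _ GG_card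
      have hnn : ∀ z : Vec2 →ₗ[ℤ] ℤ, (∀ g ∈ G, 0 ≤ z g) → 0 ≤ z (S G fun g => m g % D) := by
        intro z hz
        rw [S_map]
        exact Finset.sum_nonneg fun g hg => mul_nonneg (by positivity) (hz g hg)
      refine ⟨fun p => ν p + μ p, fun p hp => ?_, ?_, ?_, ?_⟩
      · have h1 := n1 p hp
        have h2 := (m1 p hp).trans (Nat.mul_le_mul_right (bT M) hsum)
        unfold bE
        nlinarith [Nat.zero_le (2 * bN M * bT M)]
      · rw [S_add, ← m2, ← add_assoc, map_add]
        exact add_nonneg n2 (hnn x fun g hg => (GG_mem hg).2.1)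
      · rw [S_add, ← m2, ← add_assoc, map_add]
        exact add_nonneg n3 (hnn y fun g hg => (GG_mem hg).2.2.1)
      · rw [lin_iff]
        refine ⟨S G fun g => m g / D * D, ?_, ?_⟩
        · rw [S]
          have hall : ∀ g ∈ G, Cn ({q, r} : Finset Vec2) ((D : ℤ) • g) := by
            intro g hg
            obtain ⟨a, c, e⟩ := hD g (hcn g hg) (GG_mem hg).2.1 (GG_mem hg).2.2.1
            rw [e]
            exact ((Cn.of_mem (by simp)).nsmul a).add ((Cn.of_mem (by simp)).nsmul c)
          refine Finset.sum_induction _ (Cn ({q, r} : Finset Vec2)) (fun _ _ => Cn.add) (Cn.zero _) ?_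
          intro g hg
          rw [Nat.cast_mul, mul_smul]
          exact (hall g hg).nsmul _
        · change b + S P l = _
          rw [S_add, ← m2, n4, add_assoc, add_assoc, add_assoc, ← S_add]
          simp only [Nat.mod_add_div']

theorem reduceQ {b : Vec2} {P Q : Finset Vec2} {x y : Vec2 →ₗ[ℤ] ℤ} (hb : b ∈ P)
    (hQ : ∀ q ∈ Q, (q ∈ P ∨ q ∈ LinSet b P) ∧ 0 ≤ x q ∧ 0 ≤ y q) {c v : Vec2}
    (hc : c ∈ LinSet b P) (cx : 0 ≤ x c) (cy : 0 ≤ y c) (hv : v ∈ LinSet c Q) :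
    v ∈ LinSet b P ∧ 0 ≤ x v ∧ 0 ≤ y v := by
  obtain ⟨l, rfl⟩ := hv
  change c + S Q l ∈ _ ∧ 0 ≤ x (c + S Q l) ∧ 0 ≤ y (c + S Q l)
  refine ⟨Ladd hc (Cn.sum l fun q hq => (hQ q hq).1.elim Cn.of_mem (cn_of_lin hb)), ?_, ?_⟩
  · rw [map_add, S_map]
    exact add_nonneg cx (Finset.sum_nonneg fun q hq => mul_nonneg (by positivity) (hQ q hq).2.1)
  · rw [map_add, S_map]
    exact add_nonneg cy (Finset.sum_nonneg fun q hq => mul_nonneg (by positivity) (hQ q hq).2.2)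

theorem coneLe_finite (E : ℕ) (P : Finset Vec2) : (ConeLe E P).Finite := by
  classical
  refine (Set.finite_range (fun f : P → Fin (E + 1) =>
    ∑ p ∈ P.attach, ((f p : ℕ) : ℤ) • (p : Vec2))).subset ?_
  rintro v ⟨l, hl, rfl⟩
  refine ⟨fun p => ⟨l p, Nat.lt_succ_of_le (hl p p.2)⟩, ?_⟩
  exact Finset.sum_attach P (fun p => (l p : ℤ) • p)

def PB (f : ℕ → ℕ) : Prop := ∃ c, ∀ M, f M ≤ (M + 2) ^ c

theorem PB.const (k : ℕ) : PB fun _ => k :=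
  ⟨k, fun M => (Nat.lt_two_pow_self).le.trans (Nat.pow_le_pow_left (by omega) k)⟩

theorem PB.id : PB fun M => M := ⟨1, fun M => by simp⟩

theorem PB.mul {f g : ℕ → ℕ} (hf : PB f) (hg : PB g) : PB fun M => f M * g M := by
  obtain ⟨c, hc⟩ := hf
  obtain ⟨d, hd⟩ := hg
  exact ⟨c + d, fun M => by rw [pow_add]; exact Nat.mul_le_mul (hc M) (hd M)⟩

theorem PB.add {f g : ℕ → ℕ} (hf : PB f) (hg : PB g) : PB fun M => f M + g M := by
  obtain ⟨c, hc⟩ := hf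
  obtain ⟨d, hd⟩ := hg
  refine ⟨c + d + 1, fun M => ?_⟩
  have h1 : (M + 2) ^ c ≤ (M + 2) ^ (c + d) := Nat.pow_le_pow_right (by omega) (by omega)
  have h2 : (M + 2) ^ d ≤ (M + 2) ^ (c + d) := Nat.pow_le_pow_right (by omega) (by omega)
  rw [pow_succ]
  have := hc M
  have := hd M
  nlinarith [Nat.zero_le (M * (M + 2) ^ (c + d))]

theorem PB.sq {f : ℕ → ℕ} (hf : PB f) : PB fun M => f M ^ 2 := by
  simpa only [pow_two] using hf.mul hf

theorem pbY : PB bY := (((PB.const 2).mul PB.id.sq).add PB.id)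
theorem pbT : PB bT := ((PB.const 2).mul ((((PB.const 2).mul PB.id.sq).add PB.id).add
  (PB.const 1))).mul (((PB.const 2).mul PB.id).add (PB.const 1))
theorem pbn : PB fun M => (2 * M + 1) ^ 2 := (((PB.const 2).mul PB.id).add (PB.const 1)).sq
theorem pbR : PB fun M => bR M ((2 * M + 1) ^ 2) := PB.id.add ((pbn.mul pbT).mul PB.id)
theorem pbG : PB fun M => bG M ((2 * M + 1) ^ 2) := (pbR.add pbY).add (PB.const 1)
theorem pbB : PB fun M => bB M ((2 * M + 1) ^ 2) := pbG.add pbR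
theorem pbK : PB bK' := (pbn.mul pbT).add
  (pbB.mul ((PB.const 1).add ((PB.const 2).mul (PB.id.add (PB.const 1)).sq)))
theorem pbN : PB bN := (((((PB.const 2).mul PB.id.sq).add (PB.const 1)).mul
  (((PB.const 2).mul PB.id.sq).add PB.id)).add ((PB.const 2).mul PB.id.sq)).add PB.id
theorem pbD : PB bD := ((PB.const 2).mul pbN.sq).add ((PB.const 2).mul pbN)
theorem pbE : PB bE := pbK.add (((((((PB.const 2).mul pbY).add (PB.const 1)).sq).mul pbD).add
  ((PB.const 2).mul pbN)).mul pbT)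

theorem vnorm_le {P : Finset Vec2} {p : Vec2} (hp : p ∈ P) (i : Fin 2) :
    |p i| ≤ (pnorm P : ℤ) := by
  have h1 : (p i).natAbs ≤ vnorm p :=
    Finset.le_sup (f := fun i => (p i).natAbs) (Finset.mem_univ i)
  have h2 : vnorm p ≤ pnorm P := Finset.le_sup (f := vnorm) hp
  rw [Int.abs_eq_natAbs]
  exact_mod_cast h1.trans h2

def sg (e : Bool) : ℤ := if e then 1 else -1

theorem setupQ (b : Vec2) (P : Finset Vec2) (hb : b ∈ P) (ε : Fin 2 → Bool) :
    Setup b P (pnorm P) (sg (ε 0) • LinearMap.proj 0) (sg (ε 1) • LinearMap.proj 1) := by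
  have hs : ∀ e, sg e = 1 ∨ sg e = -1 := by intro e; cases e <;> simp [sg]
  have ha : ∀ e, |sg e| = 1 := by intro e; cases e <;> simp [sg]
  have hP : P ⊆ box (pnorm P) := by
    intro p hp
    simp only [box, Fintype.mem_piFinset, Finset.mem_Icc]
    intro i
    exact abs_le.1 (vnorm_le hp i)
  refine ⟨hb, ?_, ?_, ?_, ?_, ?_⟩
  · intro p hp
    simpa [abs_mul, ha] using vnorm_le hp 0
  · intro p hp
    simpa [abs_mul, ha] using vnorm_le hp 1
  · rw [← box_card]; exact Finset.card_le_card hP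
  · intro u v h0 h1
    simp only [LinearMap.smul_apply, LinearMap.proj_apply, smul_eq_mul] at h0 h1
    have n0 : ∀ e, sg e ≠ 0 := by intro e; cases e <;> simp [sg]
    funext i
    fin_cases i
    · exact mul_left_cancel₀ (n0 _) h0
    · exact mul_left_cancel₀ (n0 _) h1
  · intro N v h0 h1
    simp only [LinearMap.smul_apply, LinearMap.proj_apply, smul_eq_mul, abs_mul, ha, one_mul] at h0 h1
    simp only [box, Fintype.mem_piFinset, Finset.mem_Icc]
    intro i
    fin_cases i
    · exact abs_le.1 h0
    · exact abs_le.1 h1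

theorem quadQ (ε : Fin 2 → Bool) (v : Vec2) :
    (∀ i, if ε i then 0 ≤ v i else v i ≤ 0) ↔
    0 ≤ (sg (ε 0) • LinearMap.proj 0 : Vec2 →ₗ[ℤ] ℤ) v ∧
    0 ≤ (sg (ε 1) • LinearMap.proj 1 : Vec2 →ₗ[ℤ] ℤ) v := by
  rw [Fin.forall_fin_two]
  simp only [LinearMap.smul_apply, LinearMap.proj_apply, smul_eq_mul]
  cases ε 0 <;> cases ε 1 <;> simp [sg]

/-- decomposition of linear sets in dimension two. The
intersection of a linear set `L(b;P)` with `b ∈ P` with a quadrant `Z` is a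
finite union of linear sets `L(cᵢ;Pᵢ)` with at most two small periods each,
all pointing into `Z`. -/
theorem statement5 :
    ∃ c : ℕ, ∀ (b : Vec2) (P : Finset Vec2) (Z : Set Vec2),
      b ∈ P → IsQuadrant Z →
      ∃ (I : Finset ℕ) (cv : ℕ → Vec2) (Ps : ℕ → Finset Vec2),
        (LinSet b P ∩ Z = ⋃ i ∈ I, LinSet (cv i) (Ps i)) ∧
        ∀ i ∈ I,
          (Ps i).card ≤ 2 ∧
          (↑(Ps i) : Set Vec2) ⊆ (↑P ∪ LinSet b P) ∩ Z ∧
          ∃ e : ℕ, e ≤ (pnorm P + 2) ^ c ∧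
            (insert (cv i) {p : Vec2 | p ∈ Ps i ∧ p ∈ LinSet b P} : Set Vec2) ⊆
              {v | ∃ w ∈ ConeLe e P, v = b + w} := by
  classical
  obtain ⟨c, hc⟩ := pbE
  refine ⟨c, ?_⟩
  rintro b P Z hb ⟨ε, rfl⟩
  have hS := setupQ b P hb ε
  have hZ := quadQ ε
  generalize (sg (ε 0) • LinearMap.proj 0 : Vec2 →ₗ[ℤ] ℤ) = x at hS hZ
  generalize (sg (ε 1) • LinearMap.proj 1 : Vec2 →ₗ[ℤ] ℤ) = y at hS hZ
  obtain ⟨Q, Q1, Q2, Q3⟩ := mainQ hS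
  set E := bE (pnorm P)
  have hfin : {v : Vec2 | (∃ w ∈ ConeLe E P, v = b + w) ∧ 0 ≤ x v ∧ 0 ≤ y v}.Finite := by
    refine ((coneLe_finite E P).image (fun w => b + w)).subset ?_
    rintro v ⟨⟨w, hw, rfl⟩, -⟩
    exact ⟨w, hw, rfl⟩
  have hmem : ∀ i ∈ hfin.toFinset.image Encodable.encode,
      (∃ w ∈ ConeLe E P, (Encodable.decode (α := Vec2) i).getD 0 = b + w) ∧
      0 ≤ x ((Encodable.decode (α := Vec2) i).getD 0) ∧
      0 ≤ y ((Encodable.decode (α := Vec2) i).getD 0) := by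
    intro i hi
    obtain ⟨v, hv, rfl⟩ := Finset.mem_image.1 hi
    simpa using (Set.Finite.mem_toFinset _).1 hv
  refine ⟨hfin.toFinset.image Encodable.encode,
    fun i => (Encodable.decode (α := Vec2) i).getD 0, fun _ => Q, ?_, ?_⟩
  · ext v
    simp only [Set.mem_iUnion, exists_prop]
    constructor
    · rintro ⟨hv, hvZ⟩
      obtain ⟨vx, vy⟩ := (hZ v).1 hvZ
      obtain ⟨ν, n1, n2, n3, n4⟩ := Q3 v hv vx vy
      refine ⟨Encodable.encode (b + S P ν), Finset.mem_image_of_mem _ ?_, ?_⟩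
      · rw [Set.Finite.mem_toFinset]
        exact ⟨⟨_, ⟨ν, n1, rfl⟩, rfl⟩, n2, n3⟩
      · simpa using n4
    · rintro ⟨i, hi, hv⟩
      obtain ⟨⟨w, ⟨l, -, hl⟩, hw⟩, cx, cy⟩ := hmem i hi
      have := reduceQ hb (fun q hq => ⟨(Q2 q hq).1, (Q2 q hq).2.1, (Q2 q hq).2.2.1⟩)
        ⟨l, by rw [hw, hl]⟩ cx cy hv
      exact ⟨this.1, (hZ v).2 this.2⟩
  · intro i hi
    refine ⟨Q1, ?_, E, hc _, ?_⟩
    · intro q hq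
      obtain ⟨h1, h2, h3, -⟩ := Q2 q hq
      exact ⟨h1, (hZ q).2 ⟨h2, h3⟩⟩
    · intro v hv
      rcases hv with rfl | ⟨hv, hvl⟩
      · exact (hmem i hi).1
      · obtain ⟨ν, n1, n2⟩ := (Q2 v hv).2.2.2 hvl
        exact ⟨S P ν, ⟨ν, n1, rfl⟩, n2⟩

end LinSets
end

section
/- There exists a constant c ∈ ℕ such that for every 2-VASS V = (Q,T), every state q ∈ Q, and every linear path scheme ρ from q to q over V, there exists a finite set R_ρ of zigzag-free linear path schemes from q to q over V such that: (i) δ(ρ) ⊆ ⋃_{σ∈R_ρ} δ(σ); (ii) every σ ∈ R_ρ has length at most (|ρ| + ‖T‖)^c; and (iii) every σ ∈ R_ρ has at most two cycles. -/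
namespace VASS

/-- Integer vectors of dimension `d`. -/
abbrev Vec (d : ℕ) := Fin d → ℤ

/-- A transition of a `d`-VASS: source state, update vector, target state. -/
abbrev Trans (d : ℕ) := ℕ × Vec d × ℕ

/-- The norm of a vector: maximum of absolute values of its components. -/
def vnorm {d : ℕ} (z : Vec d) : ℕ := Finset.univ.sup fun i => (z i).natAbs

/-- The norm of a transition set. -/
def tnorm {d : ℕ} (T : Finset (Trans d)) : ℕ := T.sup fun t => vnorm t.2.1

/-- The displacement of a word of transitions. -/
def disp {d : ℕ} (π : List (Trans d)) : Vec d := (π.map fun t => t.2.1).sum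

/-- `IsPathFrom p q π` : `π` is a path from `p` to `q`. -/
def IsPathFrom {d : ℕ} : ℕ → ℕ → List (Trans d) → Prop
  | p, q, [] => p = q
  | p, q, t :: rest => t.1 = p ∧ IsPathFrom t.2.2 q rest

/-- ℕ^d as a subset of ℤ^d. -/
def NatSet (d : ℕ) : Set (Vec d) := {v | ∀ i, 0 ≤ v i}

/-- `p(u) →^π_A q(v)`. -/
def Run {d : ℕ} (T : Finset (Trans d)) (A : Set (Vec d)) (p : ℕ) (u : Vec d)
    (q : ℕ) (v : Vec d) (π : List (Trans d)) : Prop :=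
  (∀ t ∈ π, t ∈ T) ∧ IsPathFrom p q π ∧ u ∈ A ∧ v = u + disp π ∧
    ∀ i, 1 ≤ i → i ≤ π.length → u + disp (π.take i) ∈ A

/-- `p(u) →*_A q(v)`. -/
def Reach {d : ℕ} (T : Finset (Trans d)) (A : Set (Vec d)) (p : ℕ) (u : Vec d)
    (q : ℕ) (v : Vec d) : Prop := ∃ π, Run T A p u q v π

/-- A linear path scheme `α₀ β₁* α₁ ⋯ β_k* α_k`, presented as the initial
segment `α₀` together with the list of pairs `(βᵢ, αᵢ)`. -/
abbrev LPS (d : ℕ) := List (Trans d) × List (List (Trans d) × List (Trans d))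

/-- The underlying word `α₀ β₁ α₁ ⋯ β_k α_k` of a linear path scheme. -/
def lpsSupport {d : ℕ} (ρ : LPS d) : List (Trans d) :=
  ρ.1 ++ (ρ.2.map fun s => s.1 ++ s.2).flatten

/-- The length of a linear path scheme. -/
def lpsLen {d : ℕ} (ρ : LPS d) : ℕ := (lpsSupport ρ).length

/-- The number of cycles of a linear path scheme. -/
def numCycles {d : ℕ} (ρ : LPS d) : ℕ := ρ.2.length

/-- `ρ` is a linear path scheme from `p` to `q` over the transition set `T`:
its underlying word uses transitions from `T` and is a path from `p` to `q`,
and each `βᵢ` is a cycle. -/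
def IsLPSFrom {d : ℕ} (T : Finset (Trans d)) (p q : ℕ) (ρ : LPS d) : Prop :=
  (∀ t ∈ lpsSupport ρ, t ∈ T) ∧ IsPathFrom p q (lpsSupport ρ) ∧
    ∀ s ∈ ρ.2, s.1 ≠ [] ∧ ∃ r, IsPathFrom r r s.1

/-- The word `α₀ β₁^{e₁} α₁ ⋯ β_k^{e_k} α_k` of a linear path scheme. -/
def lpsWord {d : ℕ} (ρ : LPS d) (e : List ℕ) : List (Trans d) :=
  ρ.1 ++ (List.zipWith (fun s n => (List.replicate n s.1).flatten ++ s.2) ρ.2 e).flatten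

/-- Membership in the language of a linear path scheme. -/
def InLang {d : ℕ} (ρ : LPS d) (π : List (Trans d)) : Prop :=
  ∃ e : List ℕ, e.length = numCycles ρ ∧ π = lpsWord ρ e

/-- `p(u) →^S_A q(v)` for a finite set `S` of linear path schemes. -/
def SReach {d : ℕ} (T : Finset (Trans d)) (S : Finset (LPS d)) (A : Set (Vec d))
    (p : ℕ) (u : Vec d) (q : ℕ) (v : Vec d) : Prop :=
  ∃ ρ ∈ S, ∃ π, InLang ρ π ∧ Run T A p u q v π

/-- δ(ρ): the set of displacements of words in the language of `ρ`. -/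
def DispSet {d : ℕ} (ρ : LPS d) : Set (Vec d) := {z | ∃ π, InLang ρ π ∧ z = disp π}

/-- A quadrant of ℤ². -/
def IsQuadrant (Z : Set (Vec 2)) : Prop :=
  ∃ ε : Fin 2 → Bool, Z = {v | ∀ i, if ε i then 0 ≤ v i else v i ≤ 0}

/-- A linear path scheme is zigzag-free if the displacements of all its cycles
lie in a single quadrant. -/
def ZigzagFree (ρ : LPS 2) : Prop :=
  ∃ Z, IsQuadrant Z ∧ ∀ s ∈ ρ.2, disp s.1 ∈ Z

lemma path_append {d : ℕ} {p r : ℕ} {A B : List (Trans d)} :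
    IsPathFrom p r (A ++ B) ↔ ∃ m, IsPathFrom p m A ∧ IsPathFrom m r B := by
  induction A generalizing p with
  | nil => simp [IsPathFrom]
  | cons t A ih => simp [IsPathFrom, ih, and_assoc]

lemma path_unique {d : ℕ} {p a b : ℕ} {A : List (Trans d)}
    (h1 : IsPathFrom p a A) (h2 : IsPathFrom p b A) : a = b := by
  induction A generalizing p with
  | nil => simp [IsPathFrom] at h1 h2; omega
  | cons t A ih => exact ih h1.2 h2.2

lemma path_rep {d : ℕ} {r : ℕ} {X : List (Trans d)} (h : IsPathFrom r r X) (n : ℕ) :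
    IsPathFrom r r (List.replicate n X).flatten := by
  induction n with
  | zero => simp [IsPathFrom]
  | succ n ih =>
    rw [List.replicate_succ, List.flatten_cons, path_append]
    exact ⟨r, h, ih⟩

lemma disp_append {d : ℕ} (A B : List (Trans d)) : disp (A ++ B) = disp A + disp B := by
  simp [disp]

lemma disp_nil {d : ℕ} : disp ([] : List (Trans d)) = 0 := by simp [disp]

lemma disp_rep {d : ℕ} (X : List (Trans d)) (n : ℕ) :
    disp (List.replicate n X).flatten = n • disp X := by
  induction n with
  | zero => simp [disp_nil]
  | succ n ih =>
    rw [List.replicate_succ, List.flatten_cons, disp_append, ih, succ_nsmul, add_comm]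

lemma len_rep {d : ℕ} (X : List (Trans d)) (n : ℕ) :
    (List.replicate n X).flatten.length = n * X.length := by
  simp

lemma disp_bound {d : ℕ} {T : Finset (Trans d)} {X : List (Trans d)} (h : ∀ t ∈ X, t ∈ T)
    (i : Fin d) : |disp X i| ≤ ((X.length * tnorm T : ℕ) : ℤ) := by
  induction X with
  | nil => simp [disp]
  | cons t X ih =>
    have h1 := ih (fun t ht => h t (by simp [ht]))
    have h2 : (t.2.1 i).natAbs ≤ tnorm T := by
      have a1 : vnorm t.2.1 ≤ tnorm T :=
        Finset.le_sup (f := fun t : Trans d => vnorm t.2.1) (h t (by simp))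
      have a2 : (t.2.1 i).natAbs ≤ vnorm t.2.1 :=
        Finset.le_sup (f := fun i => (t.2.1 i).natAbs) (Finset.mem_univ i)
      omega
    have h3 : disp (t :: X) i = t.2.1 i + disp X i := by simp [disp]
    rw [h3]
    have h4 : |t.2.1 i| ≤ (tnorm T : ℤ) := by rw [Int.abs_eq_natAbs]; exact_mod_cast h2
    have h5 := abs_add_le (t.2.1 i) (disp X i)
    simp only [List.length_cons]
    push_cast at h1 ⊢
    linarith

/-- insertion site -/
def Ins {d : ℕ} (p q : ℕ) (W X : List (Trans d)) : Prop :=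
  ∃ r A Z, W = A ++ Z ∧ IsPathFrom p r A ∧ IsPathFrom r q Z ∧ IsPathFrom r r X

/-- words in which all given cycles can be inserted -/
def Fam {d : ℕ} (T : Finset (Trans d)) (q : ℕ) (S : Set (List (Trans d)))
    (W : List (Trans d)) : Prop :=
  (∀ t ∈ W, t ∈ T) ∧ IsPathFrom q q W ∧ ∀ X ∈ S, Ins q q W X

/-- good cycles -/
def Good {d : ℕ} (T : Finset (Trans d)) (q : ℕ) (S : Set (List (Trans d)))
    (X : List (Trans d)) : Prop :=
  X ≠ [] ∧ (∀ t ∈ X, t ∈ T) ∧ ∀ W, Fam T q S W → Ins q q W X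

lemma good_loop {d : ℕ} {T : Finset (Trans d)} {q : ℕ} {S : Set (List (Trans d))}
    {X : List (Trans d)} (h0 : X ≠ []) (h1 : ∀ t ∈ X, t ∈ T) (h2 : IsPathFrom q q X) :
    Good T q S X :=
  ⟨h0, h1, fun W hW => ⟨q, [], W, by simp, rfl, hW.2.1, h2⟩⟩

lemma mem_rep {d : ℕ} {T : Finset (Trans d)} {X : List (Trans d)} (h1 : ∀ t ∈ X, t ∈ T) (n : ℕ) :
    ∀ t ∈ (List.replicate n X).flatten, t ∈ T := by
  intro t ht
  simp only [List.mem_flatten, List.mem_replicate] at ht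
  obtain ⟨l, ⟨_, rfl⟩, h⟩ := ht
  exact h1 t h

lemma ins_pump {d : ℕ} {p q : ℕ} {A Z Y R : List (Trans d)} {r : ℕ}
    (hA : IsPathFrom p r A) (hZ : IsPathFrom r q Z) (hR : IsPathFrom r r R)
    (hY : Ins p q (A ++ Z) Y) : Ins p q (A ++ R ++ Z) Y := by
  obtain ⟨r', A', Z', h, h1, h2, h3⟩ := hY
  rcases List.append_eq_append_iff.1 h with ⟨M, e1, e2⟩ | ⟨M, e1, e2⟩
  · -- A' = A ++ M, Z = M ++ Z'
    subst e1 e2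
    obtain ⟨m, a1, a2⟩ := path_append.1 h1
    obtain rfl := path_unique a1 hA
    exact ⟨r', A ++ R ++ M, Z', by simp, path_append.2 ⟨_, path_append.2 ⟨_, hA, hR⟩, a2⟩, h2, h3⟩
  · subst e1 e2
    obtain ⟨m, a1, a2⟩ := path_append.1 hA
    obtain rfl := path_unique a1 h1
    exact ⟨m, A', M ++ R ++ Z, by simp, h1,
      path_append.2 ⟨_, path_append.2 ⟨_, a2, hR⟩, hZ⟩, h3⟩

lemma fam_pump {d : ℕ} {T : Finset (Trans d)} {q : ℕ} {S : Set (List (Trans d))}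
    {W X : List (Trans d)} (hW : Fam T q S W) (hX : Good T q S X) (n : ℕ) :
    ∃ W', Fam T q S W' ∧ disp W' = disp W + n • disp X ∧
      W'.length = W.length + n * X.length := by
  obtain ⟨r, A, Z, rfl, hA, hZ, hr⟩ := hX.2.2 W hW
  have hR := path_rep hr n
  refine ⟨A ++ (List.replicate n X).flatten ++ Z, ⟨?_, ?_, ?_⟩, ?_, ?_⟩
  · intro t ht
    simp only [List.mem_append] at ht
    have h1 := hW.1
    simp only [List.mem_append] at h1
    rcases ht with (ht | ht) | ht
    · exact h1 t (Or.inl ht)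
    · exact mem_rep hX.2.1 n t ht
    · exact h1 t (Or.inr ht)
  · exact path_append.2 ⟨_, path_append.2 ⟨_, hA, hR⟩, hZ⟩
  · intro Y hY
    exact ins_pump hA hZ hR (hW.2.2 Y hY)
  · rw [disp_append, disp_append, disp_append, disp_rep]; abel
  · rw [List.length_append, List.length_append, List.length_append, len_rep]; omega

/-- the goal for a displacement -/
def Gl (T : Finset (Trans 2)) (q : ℕ) (L : ℕ) (z : Vec 2) : Prop :=
  ∃ σ : LPS 2, IsLPSFrom T q q σ ∧ ZigzagFree σ ∧ z ∈ DispSet σ ∧ lpsLen σ ≤ L ∧ numCycles σ ≤ 2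

lemma Gl.mono {T : Finset (Trans 2)} {q L L' : ℕ} {z : Vec 2} (h : Gl T q L z) (hL : L ≤ L') :
    Gl T q L' z := by
  obtain ⟨σ, h1, h2, h3, h4, h5⟩ := h
  exact ⟨σ, h1, h2, h3, h4.trans hL, h5⟩

def Compat (x y : Vec 2) : Prop := ∀ i, 0 ≤ x i * y i

lemma Compat.symm {x y : Vec 2} (h : Compat x y) : Compat y x := fun i => by
  rw [mul_comm]; exact h i

lemma compat_quadrant {x y : Vec 2} (h : Compat x y) :
    ∃ Z, IsQuadrant Z ∧ x ∈ Z ∧ y ∈ Z := by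
  classical
  refine ⟨_, ⟨fun i => decide (0 ≤ x i ∧ 0 ≤ y i), rfl⟩, ?_, ?_⟩
  · intro i
    have := h i
    by_cases hc : 0 ≤ x i ∧ 0 ≤ y i
    · simp [hc]
    · simp only [hc, decide_false]
      simp
      by_contra h1
      push Not at h1
      have : y i < 0 := by by_contra h2; exact hc ⟨h1.le, by omega⟩
      nlinarith
  · intro i
    have := h i
    by_cases hc : 0 ≤ x i ∧ 0 ≤ y i
    · simp [hc]
    · simp only [hc, decide_false]
      simp
      by_contra h1
      push Not at h1
      have : x i < 0 := by by_contra h2; exact hc ⟨by omega, h1.le⟩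
      nlinarith

lemma gl_aux {T : Finset (Trans 2)} {q : ℕ} {A M Z X Y : List (Trans 2)} {r r' : ℕ}
    (hT : ∀ t ∈ A ++ M ++ Z, t ∈ T)
    (hA : IsPathFrom q r A) (hM : IsPathFrom r r' M) (hZ : IsPathFrom r' q Z)
    (hX : IsPathFrom r r X) (hY : IsPathFrom r' r' Y) (hX0 : X ≠ []) (hY0 : Y ≠ [])
    (hXT : ∀ t ∈ X, t ∈ T) (hYT : ∀ t ∈ Y, t ∈ T)
    (hc : Compat (disp X) (disp Y)) (s t : ℕ) :
    Gl T q ((A ++ M ++ Z).length + X.length + Y.length)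
      (disp (A ++ M ++ Z) + s • disp X + t • disp Y) := by
  refine ⟨(A, [(X, M), (Y, Z)]), ⟨?_, ?_, ?_⟩, ?_, ?_, ?_, ?_⟩
  · intro u hu
    simp [lpsSupport] at hu hT
    rcases hu with h | h | h | h | h
    · exact hT _ _ _ (Or.inl h)
    · exact hXT _ h
    · exact hT _ _ _ (Or.inr (Or.inl h))
    · exact hYT _ h
    · exact hT _ _ _ (Or.inr (Or.inr h))
  · simp only [lpsSupport, List.map_cons, List.map_nil, List.flatten_cons, List.flatten_nil,
      List.append_nil]
    exact path_append.2 ⟨_, hA, path_append.2 ⟨_, path_append.2 ⟨_, hX, hM⟩,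
      path_append.2 ⟨_, hY, hZ⟩⟩⟩
  · intro u hu
    simp at hu
    rcases hu with rfl | rfl
    · exact ⟨hX0, _, hX⟩
    · exact ⟨hY0, _, hY⟩
  · obtain ⟨Q, h1, h2, h3⟩ := compat_quadrant hc
    refine ⟨Q, h1, ?_⟩
    intro u hu
    simp at hu
    rcases hu with rfl | rfl
    · exact h2
    · exact h3
  · refine ⟨_, ⟨[s, t], rfl, rfl⟩, ?_⟩
    simp only [lpsWord, List.zipWith_cons_cons, List.zipWith_nil_left, List.flatten_cons,
      List.flatten_nil, List.append_nil, disp_append, disp_rep]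
    abel
  · simp [lpsLen, lpsSupport]; omega
  · simp [numCycles]

lemma gl_pair {T : Finset (Trans 2)} {q : ℕ} {S : Set (List (Trans 2))} {W X Y : List (Trans 2)}
    (hW : Fam T q S W) (hX : Good T q S X) (hY : Good T q S Y)
    (hc : Compat (disp X) (disp Y)) (s t : ℕ) :
    Gl T q (W.length + X.length + Y.length) (disp W + s • disp X + t • disp Y) := by
  obtain ⟨r, A, Z, rfl, hA, hZ, hr⟩ := hX.2.2 W hW
  obtain ⟨r', A', Z', h, h1, h2, h3⟩ := hY.2.2 _ hW
  rcases List.append_eq_append_iff.1 h with ⟨M, e1, e2⟩ | ⟨M, e1, e2⟩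
  · subst e1 e2
    obtain ⟨m, a1, a2⟩ := path_append.1 h1
    obtain rfl := path_unique a1 hA
    have := gl_aux (by rw [List.append_assoc]; exact hW.1) hA a2 h2 hr h3 hX.1 hY.1
      hX.2.1 hY.2.1 hc s t
    simpa only [List.append_assoc] using this
  · subst e1 e2
    obtain ⟨m, a1, a2⟩ := path_append.1 hA
    obtain rfl := path_unique a1 h1
    have := gl_aux hW.1 h1 a2 hZ h3 hr hY.1 hX.1
      hY.2.1 hX.2.1 hc.symm t s
    rw [add_right_comm (disp _), add_right_comm (List.length _)]
    exact this

/-- splitting -/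
lemma split_pair {T : Finset (Trans 2)} {q : ℕ} {S : Set (List (Trans 2))}
    {W X Y C : List (Trans 2)}
    (hW : Fam T q S W) (hX : Good T q S X) (hY : Good T q S Y)
    {a b : ℕ} (ha : 1 ≤ a) (hb : 1 ≤ b) (hC : disp C = a • disp X + b • disp Y) (s t : ℕ) :
    ∃ W', Fam T q S W' ∧ W'.length ≤ W.length + a * X.length + b * Y.length ∧
      ∃ n m : ℕ, (disp W + s • disp X + t • disp Y = disp W' + n • disp X + m • disp C) ∨
        (disp W + s • disp X + t • disp Y = disp W' + n • disp Y + m • disp C) := by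
  have key : ∃ n s' t' : ℕ, s = n * a + s' ∧ t = n * b + t' ∧ (s' < a ∨ t' < b) := by
    rcases le_total (s / a) (t / b) with h | h
    · have h1 : s / a * b ≤ t := (Nat.mul_le_mul_right b h).trans (Nat.div_mul_le_self t b)
      exact ⟨s / a, s % a, t - s / a * b, by rw [mul_comm]; exact (Nat.div_add_mod s a).symm,
        by omega, Or.inl (Nat.mod_lt _ ha)⟩
    · have h1 : t / b * a ≤ s := (Nat.mul_le_mul_right a h).trans (Nat.div_mul_le_self s a)
      exact ⟨t / b, s - t / b * a, t % b, by omega,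
        by rw [mul_comm]; exact (Nat.div_add_mod t b).symm, Or.inr (Nat.mod_lt _ hb)⟩
  obtain ⟨n, s', t', rfl, rfl, h | h⟩ := key
  · obtain ⟨W', h1, h2, h3⟩ := fam_pump hW hX s'
    refine ⟨W', h1, ?_, t', n, Or.inr ?_⟩
    · have := Nat.mul_le_mul_right X.length h.le
      omega
    · rw [h2, hC]; module
  · obtain ⟨W', h1, h2, h3⟩ := fam_pump hW hY t'
    refine ⟨W', h1, ?_, s', n, Or.inl ?_⟩
    · have := Nat.mul_le_mul_right Y.length h.le
      omega
    · rw [h2, hC]; module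

lemma two_pow_le {N : ℕ} (hN : 2 ≤ N) (a : ℕ) : 2 * N ^ a ≤ N ^ (a + 1) := by
  rw [pow_succ, mul_comm]; exact Nat.mul_le_mul_left _ hN

lemma stepB2 {T : Finset (Trans 2)} {q : ℕ} {S : Set (List (Trans 2))} {W Z C : List (Trans 2)}
    {N : ℕ} (hN : 2 ≤ N) (hW : Fam T q S W) (hZ : Good T q S Z) (hC : Good T q S C)
    (k : Fin 2) (hk : disp C k = 0) (hz : ∀ i, (disp Z i).natAbs ≤ N ^ 2)
    (hc : ∀ i, (disp C i).natAbs ≤ N ^ 12) (hZl : Z.length ≤ N) (hCl : C.length ≤ N ^ 13)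
    (H : ∀ P R : ℕ, 1 ≤ P → 1 ≤ R → P ≤ N ^ 12 → R ≤ N ^ 2 → ∃ (κ : ℕ) (D : List (Trans 2)),
      1 ≤ κ ∧ κ ≤ N ^ 7 ∧ Good T q S D ∧ disp D = κ • (P • disp Z + R • disp C) ∧
      D.length ≤ N ^ 24) (s t : ℕ) :
    Gl T q (W.length + N ^ 28) (disp W + s • disp Z + t • disp C) := by
  have p1 := two_pow_le hN 20
  have p2 := two_pow_le hN 21
  have p3 := two_pow_le hN 22
  have p4 := two_pow_le hN 23
  have p5 := two_pow_le hN 24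
  have p6 := two_pow_le hN 25
  have p7 := two_pow_le hN 26
  have p8 := two_pow_le hN 27
  have p9 : N ^ 1 ≤ N ^ 20 := Nat.pow_le_pow_right (by omega) (by norm_num)
  have p10 : N ^ 13 ≤ N ^ 20 := Nat.pow_le_pow_right (by omega) (by norm_num)
  simp only [Nat.reduceAdd, pow_one] at p1 p2 p3 p4 p5 p6 p7 p8 p9
  by_cases hcomp : Compat (disp Z) (disp C)
  · exact (gl_pair hW hZ hC hcomp s t).mono (by omega)
  · unfold Compat at hcomp
    push Not at hcomp
    obtain ⟨o, ho⟩ := hcomp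
    have hz0 : disp Z o ≠ 0 := by rintro h; simp [h] at ho
    have hc0 : disp C o ≠ 0 := by rintro h; simp [h] at ho
    have hok : o ≠ k := by rintro rfl; exact hc0 hk
    obtain ⟨κ, D, k1, k2, hD, hDd, hDl⟩ := H (disp C o).natAbs (disp Z o).natAbs
      (by omega) (by omega) (hc o) (hz o)
    have hDo : disp D o = 0 := by
      have : ((disp C o).natAbs : ℤ) * disp Z o + ((disp Z o).natAbs : ℤ) * disp C o = 0 := by
        rcases mul_neg_iff.1 ho with ⟨a, b⟩ | ⟨a, b⟩
        · rw [Int.ofNat_natAbs_of_nonpos b.le, Int.natAbs_of_nonneg a.le]; ring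
        · rw [Int.natAbs_of_nonneg b.le, Int.ofNat_natAbs_of_nonpos a.le]; ring
      rw [hDd]
      simp only [Pi.smul_apply, Pi.add_apply]
      simp only [nsmul_eq_mul]
      rw [this, mul_zero]
    have hDk : disp D k = κ * ((disp C o).natAbs * disp Z k) := by
      rw [hDd]
      simp only [Pi.smul_apply, Pi.add_apply]
      simp only [nsmul_eq_mul, hk]
      ring
    have cases : ∀ i, i = k ∨ i = o := by omega
    have c1 : Compat (disp Z) (disp D) := by
      intro i
      rcases cases i with rfl | rfl
      · rw [hDk]
        have := mul_self_nonneg (disp Z i)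
        have e : disp Z i * (κ * ((disp C o).natAbs * disp Z i))
          = (κ * (disp C o).natAbs) * (disp Z i * disp Z i) := by ring
        rw [e]; positivity
      · rw [hDo, mul_zero]
    have c2 : Compat (disp C) (disp D) := by
      intro i
      rcases cases i with rfl | rfl
      · rw [hk, zero_mul]
      · rw [hDo, mul_zero]
    obtain ⟨W', w1, w2, n, m, h⟩ := split_pair hW hZ hC (C := D)
      (a := κ * (disp C o).natAbs) (b := κ * (disp Z o).natAbs)
      (Nat.mul_pos k1 (by omega)) (Nat.mul_pos k1 (by omega))
      (by rw [hDd]; module) s t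
    have b1 : κ * (disp C o).natAbs * Z.length ≤ N ^ 20 := by
      calc _ ≤ N ^ 7 * N ^ 12 * N := Nat.mul_le_mul (Nat.mul_le_mul k2 (hc o)) hZl
        _ = _ := by ring
    have b2 : κ * (disp Z o).natAbs * C.length ≤ N ^ 22 := by
      calc _ ≤ N ^ 7 * N ^ 2 * N ^ 13 := Nat.mul_le_mul (Nat.mul_le_mul k2 (hz o)) hCl
        _ = _ := by ring
    rcases h with h | h
    · rw [h]
      exact (gl_pair w1 hZ hD c1 n m).mono (by omega)
    · rw [h]
      exact (gl_pair w1 hC hD c2 n m).mono (by omega)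

lemma cycle_exists {T : Finset (Trans 2)} {q : ℕ} {S : Set (List (Trans 2))}
    {W X Y : List (Trans 2)}
    {N : ℕ} (hN : 2 ≤ N) (hW : Fam T q S W) (hX : Good T q S X) (hY : Good T q S Y)
    (hWl : W.length ≤ N) (hXl : X.length ≤ N) (hYl : Y.length ≤ N)
    (hw : ∀ i, |disp W i| ≤ (N : ℤ) ^ 2) (hx : ∀ i, |disp X i| ≤ (N : ℤ) ^ 2)
    (hy : ∀ i, |disp Y i| ≤ (N : ℤ) ^ 2)
    (hdet : disp X 0 * disp Y 1 - disp X 1 * disp Y 0 ≠ 0)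
    (h P R : ℕ) (hP : 1 ≤ P) (hR : 1 ≤ R) (hPb : P ≤ N ^ h) (hRb : R ≤ N ^ h) :
    ∃ (κ : ℕ) (D : List (Trans 2)),
      1 ≤ κ ∧ κ ≤ N ^ 7 ∧ Good T q S D ∧ disp D = κ • (P • disp X + R • disp Y) ∧
      D.length ≤ N ^ (h + 11) := by
  have dbound : ∀ a b c d : ℤ, |a| ≤ (N:ℤ)^2 → |b| ≤ (N:ℤ)^2 → |c| ≤ (N:ℤ)^2 → |d| ≤ (N:ℤ)^2 →
      |a * b - c * d| ≤ 2 * (N:ℤ)^4 := by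
    intro a b c d ha hb hc hd
    have h1 := abs_sub (a * b) (c * d)
    rw [abs_mul, abs_mul] at h1
    have h2 : |a| * |b| ≤ (N:ℤ)^2 * (N:ℤ)^2 := mul_le_mul ha hb (abs_nonneg _) (by positivity)
    have h3 : |c| * |d| ≤ (N:ℤ)^2 * (N:ℤ)^2 := mul_le_mul hc hd (abs_nonneg _) (by positivity)
    have e : (N:ℤ)^2 * (N:ℤ)^2 = (N:ℤ)^4 := by ring
    rw [e] at h2 h3
    linarith
  obtain ⟨ε, hε, hm⟩ : ∃ ε : ℤ, |ε| = 1 ∧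
      ((disp X 0 * disp Y 1 - disp X 1 * disp Y 0).natAbs : ℤ)
        = ε * (disp X 0 * disp Y 1 - disp X 1 * disp Y 0) := by
    rcases le_total 0 (disp X 0 * disp Y 1 - disp X 1 * disp Y 0) with h | h
    · exact ⟨1, by simp, by rw [Int.natAbs_of_nonneg h]; ring⟩
    · exact ⟨-1, by simp, by rw [Int.ofNat_natAbs_of_nonpos h]; ring⟩
  have mb := dbound _ _ _ _ (hx 0) (hy 1) (hx 1) (hy 0)
  have xb := dbound _ _ _ _ (hw 0) (hy 1) (hw 1) (hy 0)
  have yb := dbound _ _ _ _ (hx 0) (hw 1) (hx 1) (hw 0)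
  set m := (disp X 0 * disp Y 1 - disp X 1 * disp Y 0).natAbs with hmdef
  have hm1 : 1 ≤ m := by omega
  rw [Int.abs_eq_natAbs, ← hmdef] at mb
  have mb' : m ≤ 2 * N ^ 4 := by exact_mod_cast mb
  obtain ⟨x, hxdef⟩ : ∃ x : ℤ, x = ε * (disp W 0 * disp Y 1 - disp W 1 * disp Y 0) := ⟨_, rfl⟩
  obtain ⟨y, hydef⟩ : ∃ x : ℤ, x = ε * (disp X 0 * disp W 1 - disp X 1 * disp W 0) := ⟨_, rfl⟩
  have xb' : x.natAbs ≤ 2 * N ^ 4 := by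
    have : |x| ≤ 2 * (N:ℤ)^4 := by rw [hxdef, abs_mul, hε, one_mul]; exact xb
    rw [Int.abs_eq_natAbs] at this; exact_mod_cast this
  have yb' : y.natAbs ≤ 2 * N ^ 4 := by
    have : |y| ≤ 2 * (N:ℤ)^4 := by rw [hydef, abs_mul, hε, one_mul]; exact yb
    rw [Int.abs_eq_natAbs] at this; exact_mod_cast this
  obtain ⟨κ, hκ⟩ : ∃ κ, κ = x.natAbs + y.natAbs + 1 := ⟨_, rfl⟩
  have kP : κ ≤ κ * P := Nat.le_mul_of_pos_right _ hP
  have kR : κ ≤ κ * R := Nat.le_mul_of_pos_right _ hR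
  have p1 := two_pow_le hN 4
  have p2 := two_pow_le hN 5
  have p3 := two_pow_le hN 6
  have p4 : 1 ≤ N ^ 6 := Nat.one_le_pow _ _ (by omega)
  simp only [Nat.reduceAdd] at p1 p2 p3
  have k7 : κ ≤ N ^ 7 := by omega
  obtain ⟨a, ha⟩ : ∃ a : ℕ, (a : ℤ) = ((κ * P : ℕ) : ℤ) - x :=
    ⟨(((κ * P : ℕ) : ℤ) - x).toNat, by omega⟩
  obtain ⟨c, hc⟩ : ∃ a : ℕ, (a : ℤ) = ((κ * R : ℕ) : ℤ) - y :=
    ⟨(((κ * R : ℕ) : ℤ) - y).toNat, by omega⟩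
  have ha1 : 1 ≤ a := by omega
  have ha2 : a ≤ 2 * (κ * P) := by omega
  have hc2 : c ≤ 2 * (κ * R) := by omega
  obtain ⟨W1, f1, d1, l1⟩ := fam_pump hW hX a
  obtain ⟨W2, f2, d2, l2⟩ := fam_pump f1 hY c
  have hXpos : 1 ≤ X.length := List.length_pos_iff.2 hX.1
  have hne : 1 ≤ W2.length := by
    have := Nat.mul_le_mul ha1 hXpos
    omega
  refine ⟨κ, W2 ++ (List.replicate (m - 1) W).flatten, by omega, k7, good_loop ?_ ?_ ?_, ?_, ?_⟩
  · intro h0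
    rw [List.append_eq_nil_iff] at h0
    rw [h0.1] at hne
    simp at hne
  · intro t ht
    rcases List.mem_append.1 ht with h | h
    · exact f2.1 t h
    · exact mem_rep hW.1 _ t h
  · exact path_append.2 ⟨q, f2.2.1, path_rep hW.2.1 _⟩
  · have cram : ∀ i, (m : ℤ) * disp W i = x * disp X i + y * disp Y i := by
      intro i
      rw [hm, hxdef, hydef]
      fin_cases i <;> simp <;> ring
    rw [disp_append, disp_rep, d2, d1]
    funext i
    have := cram i
    simp only [Pi.add_apply, Pi.smul_apply]
    simp only [nsmul_eq_mul]
    rw [Nat.cast_sub hm1, ha, hc]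
    push_cast
    linear_combination this
  · rw [List.length_append, len_rep, l2, l1]
    have e : (m - 1) * W.length + W.length = m * W.length := by
      conv_rhs => rw [← Nat.sub_add_cancel hm1]
      ring
    have b0 : m * W.length ≤ N ^ (h + 8) := by
      calc _ ≤ N ^ 5 * N := Nat.mul_le_mul (by omega) hWl
        _ = N ^ 6 := by ring
        _ ≤ _ := Nat.pow_le_pow_right (by omega) (by omega)
    have b1 : a * X.length ≤ 2 * N ^ (h + 8) := by
      calc _ ≤ (2 * (N ^ 7 * N ^ h)) * N :=
            Nat.mul_le_mul (ha2.trans (Nat.mul_le_mul_left _ (Nat.mul_le_mul k7 hPb))) hXl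
        _ = _ := by ring
    have b2 : c * Y.length ≤ 2 * N ^ (h + 8) := by
      calc _ ≤ (2 * (N ^ 7 * N ^ h)) * N :=
            Nat.mul_le_mul (hc2.trans (Nat.mul_le_mul_left _ (Nat.mul_le_mul k7 hRb))) hYl
        _ = _ := by ring
    have q1 := two_pow_le hN (h + 8)
    have q2 := two_pow_le hN (h + 9)
    have q3 := two_pow_le hN (h + 10)
    simp only [add_assoc, Nat.reduceAdd] at q1 q2 q3
    omega

lemma stepB {T : Finset (Trans 2)} {q : ℕ} {S : Set (List (Trans 2))}
    {W0 W X Y : List (Trans 2)}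
    {N : ℕ} (hN : 2 ≤ N) (hW0 : Fam T q S W0) (hW : Fam T q S W)
    (hX : Good T q S X) (hY : Good T q S Y)
    (hWl : W0.length ≤ N) (hXl : X.length ≤ N) (hYl : Y.length ≤ N)
    (hw : ∀ i, |disp W0 i| ≤ (N : ℤ) ^ 2) (hx : ∀ i, |disp X i| ≤ (N : ℤ) ^ 2)
    (hy : ∀ i, |disp Y i| ≤ (N : ℤ) ^ 2) (s t : ℕ) :
    Gl T q (W.length + N ^ 30) (disp W + s • disp X + t • disp Y) := by
  have hx' : ∀ i, (disp X i).natAbs ≤ N ^ 2 := by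
    intro i; have := hx i; rw [Int.abs_eq_natAbs] at this; exact_mod_cast this
  have hy' : ∀ i, (disp Y i).natAbs ≤ N ^ 2 := by
    intro i; have := hy i; rw [Int.abs_eq_natAbs] at this; exact_mod_cast this
  have p1 := two_pow_le hN 28
  have p2 := two_pow_le hN 29
  have p3 : N ^ 1 ≤ N ^ 28 := Nat.pow_le_pow_right (by omega) (by norm_num)
  have p4 : N ^ 11 ≤ N ^ 28 := Nat.pow_le_pow_right (by omega) (by norm_num)
  have p5 : N ^ 3 ≤ N ^ 10 := Nat.pow_le_pow_right (by omega) (by norm_num)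
  have p6 := two_pow_le hN 10
  simp only [Nat.reduceAdd, pow_one] at p1 p2 p3 p6
  by_cases hcomp : Compat (disp X) (disp Y)
  · exact (gl_pair hW hX hY hcomp s t).mono (by omega)
  unfold Compat at hcomp
  push Not at hcomp
  obtain ⟨k, ho⟩ := hcomp
  have hx0 : disp X k ≠ 0 := by rintro h; simp [h] at ho
  have hy0 : disp Y k ≠ 0 := by rintro h; simp [h] at ho
  obtain ⟨p, hp⟩ : ∃ p, p = (disp Y k).natAbs := ⟨_, rfl⟩
  obtain ⟨r, hr⟩ : ∃ p, p = (disp X k).natAbs := ⟨_, rfl⟩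
  have hpb : p ≤ N ^ 2 := hp ▸ hy' k
  have hrb : r ≤ N ^ 2 := hr ▸ hx' k
  have hp1 : 1 ≤ p := by omega
  have hr1 : 1 ≤ r := by omega
  obtain ⟨ε, e1, e2⟩ : ∃ ε : ℤ, (p : ℤ) = ε * disp Y k ∧ (r : ℤ) = - ε * disp X k := by
    rcases mul_neg_iff.1 ho with ⟨a, b⟩ | ⟨a, b⟩
    · exact ⟨-1, by omega, by omega⟩
    · exact ⟨1, by omega, by omega⟩
  have huk : (p : ℤ) * disp X k + r * disp Y k = 0 := by rw [e1, e2]; ring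
  have compat_self : ∀ z : Vec 2, Compat z z := fun z i => mul_self_nonneg _
  by_cases hdet : disp X 0 * disp Y 1 - disp X 1 * disp Y 0 = 0
  · have hu : p • disp X + r • disp Y = 0 := by
      funext i
      simp only [Pi.add_apply, Pi.smul_apply, Pi.zero_apply]
      simp only [nsmul_eq_mul]
      rw [e1, e2]
      fin_cases k <;> fin_cases i <;> simp <;> first | (ring1) | linear_combination ε * hdet | linear_combination (-ε) * hdet
    obtain ⟨W', w1, w2, n, m, h⟩ := split_pair hW hX hY (C := []) hp1 hr1
      (by rw [hu, disp_nil]) s t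
    have b1 : p * X.length ≤ N ^ 3 := by
      calc _ ≤ N ^ 2 * N := Nat.mul_le_mul hpb hXl
        _ = _ := by ring
    have b2 : r * Y.length ≤ N ^ 3 := by
      calc _ ≤ N ^ 2 * N := Nat.mul_le_mul hrb hYl
        _ = _ := by ring
    rw [disp_nil, smul_zero, add_zero, add_zero] at h
    rcases h with h | h
    · rw [h]
      have := gl_pair w1 hX hX (compat_self _) n 0
      rw [zero_smul, add_zero] at this
      exact this.mono (by omega)
    · rw [h]
      have := gl_pair w1 hY hY (compat_self _) n 0
      rw [zero_smul, add_zero] at this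
      exact this.mono (by omega)
  · have cyc := cycle_exists hN hW0 hX hY hWl hXl hYl hw hx hy hdet
    obtain ⟨κ, C, k1, k2, hC, hCd, hCl⟩ := cyc 2 p r hp1 hr1 hpb hrb
    have hCk : disp C k = 0 := by
      rw [hCd]
      simp only [Pi.add_apply, Pi.smul_apply]
      simp only [nsmul_eq_mul]
      rw [huk, mul_zero]
    have hCb : ∀ i, (disp C i).natAbs ≤ N ^ 12 := by
      intro i
      rw [hCd]
      simp only [Pi.add_apply, Pi.smul_apply]
      simp only [nsmul_eq_mul]
      rw [Int.natAbs_mul, Int.natAbs_natCast]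
      have h1 := Int.natAbs_add_le ((p : ℤ) * disp X i) (r * disp Y i)
      rw [Int.natAbs_mul, Int.natAbs_natCast, Int.natAbs_mul, Int.natAbs_natCast] at h1
      have h2 := Nat.mul_le_mul hpb (hx' i)
      have h3 := Nat.mul_le_mul hrb (hy' i)
      have e : N ^ 2 * N ^ 2 = N ^ 4 := by ring
      have q := two_pow_le hN 4
      rw [e] at h2 h3
      simp only [Nat.reduceAdd] at q
      calc _ ≤ N ^ 7 * N ^ 5 := Nat.mul_le_mul k2 (by omega)
        _ = _ := by ring
    have hκp : κ * p ≤ N ^ 9 := by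
      calc _ ≤ N ^ 7 * N ^ 2 := Nat.mul_le_mul k2 hpb
        _ = _ := by ring
    have hκr : κ * r ≤ N ^ 9 := by
      calc _ ≤ N ^ 7 * N ^ 2 := Nat.mul_le_mul k2 hrb
        _ = _ := by ring
    obtain ⟨W', w1, w2, n, m, h⟩ := split_pair hW hX hY (C := C)
      (a := κ * p) (b := κ * r)
      (Nat.mul_pos k1 (by omega)) (Nat.mul_pos k1 (by omega))
      (by rw [hCd]; module) s t
    have b1 : κ * p * X.length ≤ N ^ 10 := by
      calc _ ≤ N ^ 9 * N := Nat.mul_le_mul hκp hXl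
        _ = _ := by ring
    have b2 : κ * r * Y.length ≤ N ^ 10 := by
      calc _ ≤ N ^ 9 * N := Nat.mul_le_mul hκr hYl
        _ = _ := by ring
    have q1 := two_pow_le hN 12
    have q2 : N ^ 11 ≤ N ^ 12 := Nat.pow_le_pow_right (by omega) (by norm_num)
    simp only [Nat.reduceAdd] at q1
    rcases h with h | h
    · rw [h]
      refine (stepB2 hN w1 hX hC k hCk hx' hCb hXl hCl ?_ n m).mono (by omega)
      intro P R hP hR hPb hRb
      have c1 : R * (κ * p) ≤ N ^ 11 := by
        calc _ ≤ N ^ 2 * N ^ 9 := Nat.mul_le_mul hRb hκp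
          _ = _ := by ring
      have c2 : R * (κ * r) ≤ N ^ 11 := by
        calc _ ≤ N ^ 2 * N ^ 9 := Nat.mul_le_mul hRb hκr
          _ = _ := by ring
      obtain ⟨κ', D, g1, g2, g3, g4, g5⟩ := cyc 13 (P + R * (κ * p)) (R * (κ * r)) (by omega)
        (Nat.mul_pos hR (Nat.mul_pos k1 hr1)) (by omega) (by omega)
      exact ⟨κ', D, g1, g2, g3, by rw [g4, hCd]; module, g5⟩
    · rw [h]
      refine (stepB2 hN w1 hY hC k hCk hy' hCb hYl hCl ?_ n m).mono (by omega)
      intro P R hP hR hPb hRb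
      have c1 : R * (κ * p) ≤ N ^ 11 := by
        calc _ ≤ N ^ 2 * N ^ 9 := Nat.mul_le_mul hRb hκp
          _ = _ := by ring
      have c2 : R * (κ * r) ≤ N ^ 11 := by
        calc _ ≤ N ^ 2 * N ^ 9 := Nat.mul_le_mul hRb hκr
          _ = _ := by ring
      obtain ⟨κ', D, g1, g2, g3, g4, g5⟩ := cyc 13 (R * (κ * p)) (P + R * (κ * r))
        (Nat.mul_pos hR (Nat.mul_pos k1 hp1)) (by omega) (by omega) (by omega)
      exact ⟨κ', D, g1, g2, g3, by rw [g4, hCd]; module, g5⟩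


lemma dep3 (x y z : Vec 2) (M : ℤ) (hM : 1 ≤ M) (hx : ∀ i, |x i| ≤ M) (hy : ∀ i, |y i| ≤ M)
    (hz : ∀ i, |z i| ≤ M) :
    ∃ a b c : ℤ, (a ≠ 0 ∨ b ≠ 0 ∨ c ≠ 0) ∧ |a| ≤ 2 * M ^ 2 ∧ |b| ≤ 2 * M ^ 2 ∧ |c| ≤ 2 * M ^ 2 ∧
      a • x + b • y + c • z = 0 := by
  have dbound : ∀ a b c d : ℤ, |a| ≤ M → |b| ≤ M → |c| ≤ M → |d| ≤ M →
      |a * b - c * d| ≤ 2 * M^2 := by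
    intro a b c d ha hb hc hd
    have h1 := abs_sub (a * b) (c * d)
    rw [abs_mul, abs_mul] at h1
    have h2 : |a| * |b| ≤ M * M := mul_le_mul ha hb (abs_nonneg _) (by positivity)
    have h3 : |c| * |d| ≤ M * M := mul_le_mul hc hd (abs_nonneg _) (by positivity)
    nlinarith
  have hMM : M ≤ 2 * M ^ 2 := by nlinarith
  by_cases h : (y 0 * z 1 - y 1 * z 0 ≠ 0 ∨ z 0 * x 1 - z 1 * x 0 ≠ 0 ∨ x 0 * y 1 - x 1 * y 0 ≠ 0)
  · refine ⟨_, _, _, h, dbound _ _ _ _ (hy 0) (hz 1) (hy 1) (hz 0),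
      dbound _ _ _ _ (hz 0) (hx 1) (hz 1) (hx 0), dbound _ _ _ _ (hx 0) (hy 1) (hx 1) (hy 0), ?_⟩
    funext i
    fin_cases i <;> simp <;> ring
  · push Not at h
    obtain ⟨-, -, h⟩ := h
    by_cases h0 : x 0 = 0
    · by_cases h1 : x 1 = 0
      · refine ⟨1, 0, 0, by simp, by simp; omega, by simp; positivity, by simp; positivity, ?_⟩
        funext i
        fin_cases i <;> simp [h0, h1]
      · refine ⟨y 1, - x 1, 0, by simp [h1], (hy 1).trans hMM, by rw [abs_neg]; exact (hx 1).trans hMM,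
          by simp; positivity, ?_⟩
        funext i
        fin_cases i <;> simp
        · linear_combination h
        · ring
    · refine ⟨y 0, - x 0, 0, by simp [h0], (hy 0).trans hMM, by rw [abs_neg]; exact (hx 0).trans hMM,
          by simp; positivity, ?_⟩
      funext i
      fin_cases i <;> simp
      · ring
      · linear_combination -h

lemma shift {k : ℕ} (v : Fin k → Vec 2) (e : Fin k → ℕ) (d : Fin k → ℤ) (hd : d ≠ 0)
    (h1 : ∀ l, |d l| ≤ e l) (h2 : ∑ l, d l • v l = 0) :
    ∃ e' : Fin k → ℕ, ∑ l, e' l • v l = ∑ l, e l • v l ∧ toLex e' < toLex e := by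
  classical
  obtain ⟨l0, hl0, hmin⟩ : ∃ l0, d l0 ≠ 0 ∧ ∀ l < l0, d l = 0 := by
    obtain ⟨l, hl⟩ := Function.ne_iff.1 hd
    obtain ⟨m, hm, hm2⟩ := (wellFounded_lt (α := Fin k)).has_min {l | d l ≠ 0} ⟨l, hl⟩
    refine ⟨m, hm, fun l hl => ?_⟩
    by_contra h
    exact hm2 l h hl
  obtain ⟨ε, hε, hneg⟩ : ∃ ε : ℤ, (ε = 1 ∨ ε = -1) ∧ ε * d l0 < 0 := by
    rcases lt_or_gt_of_ne hl0 with h | h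
    · exact ⟨1, by simp, by omega⟩
    · exact ⟨-1, by simp, by omega⟩
  have hcast : ∀ l, (((e l : ℤ) + ε * d l).toNat : ℤ) = e l + ε * d l := by
    intro l
    have := abs_le.1 (h1 l)
    rcases hε with rfl | rfl <;> omega
  refine ⟨fun l => ((e l : ℤ) + ε * d l).toNat, ?_, ?_⟩
  · have : ∀ l, ((e l : ℤ) + ε * d l).toNat • v l = e l • v l + ε • (d l • v l) := by
      intro l
      rw [← natCast_zsmul, hcast l, add_smul, natCast_zsmul, mul_smul]
    simp only [this]
    rw [Finset.sum_add_distrib, ← Finset.smul_sum, h2, smul_zero, add_zero]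
  · refine ⟨l0, fun l hl => ?_, ?_⟩
    · show ((e l : ℤ) + ε * d l).toNat = e l
      rw [hmin l hl]; simp
    · show ((e l0 : ℤ) + ε * d l0).toNat < e l0
      have := hcast l0
      omega

lemma stepA {k : ℕ} (v : Fin k → Vec 2) (M : ℕ) (hM : 1 ≤ M) (hv : ∀ l i, |v l i| ≤ (M : ℤ))
    (i0 : Fin k) (e : Fin k → ℕ) :
    ∃ e' : Fin k → ℕ, ∑ l, e' l • v l = ∑ l, e l • v l ∧
      ∃ i j, ∀ l, l ≠ i → l ≠ j → e' l ≤ 2 * M ^ 2 := by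
  classical
  obtain ⟨m, hm, hmin⟩ := (wellFounded_lt (α := Lex (Fin k → ℕ))).has_min
    {f | ∑ l, (ofLex f) l • v l = ∑ l, e l • v l} ⟨toLex e, rfl⟩
  refine ⟨ofLex m, hm, ?_⟩
  by_contra hcon
  push Not at hcon
  obtain ⟨l1, -, -, h1⟩ := hcon i0 i0
  obtain ⟨l2, h21, -, h2⟩ := hcon l1 l1
  obtain ⟨l3, h31, h32, h3⟩ := hcon l1 l2
  obtain ⟨a, b, c, hne, ha, hb, hc, habc⟩ := dep3 (v l1) (v l2) (v l3) M (by exact_mod_cast hM)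
    (hv l1) (hv l2) (hv l3)
  have h1' : (2 * M ^ 2 : ℤ) < (ofLex m l1 : ℤ) := by exact_mod_cast h1
  have h2' : (2 * M ^ 2 : ℤ) < (ofLex m l2 : ℤ) := by exact_mod_cast h2
  have h3' : (2 * M ^ 2 : ℤ) < (ofLex m l3 : ℤ) := by exact_mod_cast h3
  obtain ⟨e', q1, q2⟩ := shift v (ofLex m)
    (fun l => if l = l1 then a else if l = l2 then b else if l = l3 then c else 0)
    (by
      intro h0
      have g1 := congrFun h0 l1
      have g2 := congrFun h0 l2
      have g3 := congrFun h0 l3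
      simp [h21] at g1 g2
      simp [h31, h32] at g3
      simp_all)
    (by
      intro l
      split_ifs with u1 u2 u3
      · subst u1; omega
      · subst u2; omega
      · subst u3; omega
      · simp)
    (by
      have : ∀ l, (if l = l1 then a else if l = l2 then b else if l = l3 then c else 0) • v l
          = (if l = l1 then a • v l1 else 0) + (if l = l2 then b • v l2 else 0)
            + (if l = l3 then c • v l3 else 0) := by
        intro l
        by_cases u1 : l = l1
        · subst u1; simp [h21.symm, h31.symm]
        · by_cases u2 : l = l2
          · subst u2; simp [u1, h32.symm]
          · by_cases u3 : l = l3
            · subst u3; simp [u1, u2]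
            · simp [u1, u2, u3]
      simp only [this]
      simp only [Finset.sum_add_distrib, Finset.sum_ite_eq', Finset.mem_univ, if_true]
      exact habc)
  exact hmin (toLex e') (by
    show ∑ l, e' l • v l = _
    rw [q1]; exact hm) q2

lemma base_path {d : ℕ} (L : List (List (Trans d) × List (Trans d)))
    (p q : ℕ) (h1 : IsPathFrom p q (L.map fun s => s.1 ++ s.2).flatten)
    (h2 : ∀ s ∈ L, s.1 ≠ [] ∧ ∃ r, IsPathFrom r r s.1) :
    IsPathFrom p q (L.map fun s => s.2).flatten ∧
      ∀ s ∈ L, Ins p q (L.map fun s => s.2).flatten s.1 := by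
  induction L generalizing p with
  | nil => exact ⟨h1, by simp⟩
  | cons s L ih =>
    simp only [List.map_cons, List.flatten_cons] at h1 ⊢
    obtain ⟨m, a1, a2⟩ := path_append.1 h1
    obtain ⟨m', a3, a4⟩ := path_append.1 a1
    obtain ⟨hne, r, hr⟩ := h2 s (by simp)
    have hpr : p = r := by
      rcases hs : s.1 with _ | ⟨t, X⟩
      · exact absurd hs hne
      · rw [hs] at a3 hr
        exact a3.1.symm.trans hr.1
    subst hpr
    obtain rfl := path_unique a3 hr
    obtain ⟨b1, b2⟩ := ih m a2 (fun s hs => h2 s (by simp [hs]))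
    have full := path_append.2 ⟨m, a4, b1⟩
    refine ⟨full, ?_⟩
    intro u hu
    rcases List.mem_cons.1 hu with rfl | hu
    · exact ⟨_, [], _, by simp, rfl, full, hr⟩
    · obtain ⟨r', A, Z, e, c1, c2, c3⟩ := b2 u hu
      exact ⟨r', s.2 ++ A, Z, by rw [e, List.append_assoc], path_append.2 ⟨m, a4, c1⟩, c2, c3⟩

lemma base_disp {d : ℕ} (L : List (List (Trans d) × List (Trans d))) (e : List ℕ)
    (he : e.length = L.length) :
    ∃ f : Fin L.length → ℕ,
    disp (List.zipWith (fun s n => (List.replicate n s.1).flatten ++ s.2) L e).flatten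
      = disp (L.map fun s => s.2).flatten + ∑ l, f l • disp (L.get l).1 := by
  induction L generalizing e with
  | nil => exact ⟨fun _ => 0, by simp [disp_nil]⟩
  | cons s L ih =>
    rcases e with _ | ⟨n, e⟩
    · simp at he
    · obtain ⟨f, hf⟩ := ih e (by simpa using he)
      refine ⟨Fin.cons n f, ?_⟩
      simp only [List.zipWith_cons_cons, List.flatten_cons, List.map_cons, disp_append, disp_rep, hf]
      have : ∑ l : Fin (s :: L).length, (Fin.cons n f : Fin (L.length + 1) → ℕ) l • disp ((s :: L).get l).1
          = n • disp s.1 + ∑ l, f l • disp (L.get l).1 := by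
        exact Fin.sum_univ_succ _
      rw [this]; abel

lemma base_len {d : ℕ} (L : List (List (Trans d) × List (Trans d))) :
    (L.map fun s => s.1 ++ s.2).flatten.length
      = (L.map fun s => s.2).flatten.length + ∑ l : Fin L.length, (L.get l).1.length := by
  induction L with
  | nil => simp
  | cons s L ih =>
    have : ∑ l : Fin (s :: L).length, ((s :: L).get l).1.length
          = s.1.length + ∑ l : Fin L.length, (L.get l).1.length := by
        exact Fin.sum_univ_succ _
    rw [this]
    simp only [List.map_cons, List.flatten_cons, List.length_append, ih]
    omega

lemma fam_sum {d : ℕ} {T : Finset (Trans d)} {q : ℕ} {S : Set (List (Trans d))}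
    {W : List (Trans d)} {k : ℕ} (X : Fin k → List (Trans d)) (hW : Fam T q S W)
    (hX : ∀ l, Good T q S (X l)) (e : Fin k → ℕ) :
    ∃ W', Fam T q S W' ∧ disp W' = disp W + ∑ l, e l • disp (X l) ∧
      W'.length = W.length + ∑ l, e l * (X l).length := by
  classical
  induction (Finset.univ : Finset (Fin k)) using Finset.induction_on with
  | empty => exact ⟨W, hW, by simp, by simp⟩
  | insert a s ha ih =>
    obtain ⟨W1, h1, h2, h3⟩ := ih
    obtain ⟨W2, g1, g2, g3⟩ := fam_pump h1 (hX a) (e a)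
    refine ⟨W2, g1, ?_, ?_⟩
    · rw [g2, h2, Finset.sum_insert ha]; abel
    · rw [g3, h3, Finset.sum_insert ha]; omega

lemma fin_lists {α : Type*} (T : Finset α) (n : ℕ) :
    {l : List α | (∀ t ∈ l, t ∈ T) ∧ l.length ≤ n}.Finite := by
  have h := (List.finite_length_le {t // t ∈ T} n).image (List.map Subtype.val)
  refine h.subset ?_
  rintro l ⟨h1, h2⟩
  refine ⟨l.attach.map (fun t => ⟨t.1, h1 t.1 t.2⟩), ?_, ?_⟩
  · simpa using h2
  · simp [List.map_map, Function.comp_def]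

lemma fin_lps {d : ℕ} (T : Finset (Trans d)) (p q n : ℕ) :
    {σ : LPS d | IsLPSFrom T p q σ ∧ lpsLen σ ≤ n ∧ numCycles σ ≤ 2}.Finite := by
  set F := {l : List (Trans d) | (∀ t ∈ l, t ∈ T) ∧ l.length ≤ n} with hF
  have hFf : F.Finite := fin_lists T n
  have h2 := fin_lists (hFf.prod hFf).toFinset 2
  refine (hFf.prod h2).subset ?_
  rintro ⟨A, L⟩ ⟨⟨h1, -, -⟩, h3, h4⟩
  simp only [lpsLen, lpsSupport, List.length_append] at h3
  simp only [lpsSupport, List.mem_append] at h1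
  refine ⟨⟨fun t ht => h1 t (Or.inl ht), by simp only; omega⟩, ?_, h4⟩
  rintro ⟨X, Y⟩ hs
  have hsub : (X ++ Y).Sublist (L.map fun s => s.1 ++ s.2).flatten :=
    List.sublist_flatten_of_mem (List.mem_map.2 ⟨(X, Y), hs, rfl⟩)
  have hlen := hsub.length_le
  rw [List.length_append] at hlen
  simp only [Set.Finite.mem_toFinset, Set.mem_prod, hF, Set.mem_ofPred_eq]
  refine ⟨⟨fun t ht => h1 t (Or.inr (hsub.subset (by simp [ht]))), by omega⟩,
    ⟨fun t ht => h1 t (Or.inr (hsub.subset (by simp [ht]))), by omega⟩⟩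

lemma disp_bound' {d : ℕ} {T : Finset (Trans d)} {X : List (Trans d)} (h : ∀ t ∈ X, t ∈ T)
    {N : ℕ} (h1 : X.length ≤ N) (h2 : tnorm T ≤ N)
    (i : Fin d) : |disp X i| ≤ (N : ℤ) ^ 2 := by
  refine (disp_bound h i).trans ?_
  have := Nat.mul_le_mul h1 h2
  rw [← sq] at this
  exact_mod_cast this

lemma main_gl (T : Finset (Trans 2)) (q : ℕ) (ρ : LPS 2) (hρ : IsLPSFrom T q q ρ) (z : Vec 2)
    (hz : z ∈ DispSet ρ) : Gl T q ((lpsLen ρ + tnorm T) ^ 40) z := by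
  obtain ⟨N, hNdef⟩ : ∃ N, N = lpsLen ρ + tnorm T := ⟨_, rfl⟩
  rw [← hNdef]
  obtain ⟨A, L⟩ := ρ
  have hlen : lpsLen (A, L) = A.length + ((L.map fun s => s.2).flatten.length
      + ∑ l : Fin L.length, (L.get l).1.length) := by
    rw [← base_len]; simp only [lpsLen, lpsSupport, List.length_append]
  have hcyc : ∀ s ∈ L, s.1 ≠ [] ∧ ∃ r, IsPathFrom r r s.1 := hρ.2.2
  have hklen : L.length ≤ ∑ l : Fin L.length, (L.get l).1.length := by
    calc L.length = ∑ l : Fin L.length, 1 := by simp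
      _ ≤ _ := Finset.sum_le_sum fun l _ =>
        List.length_pos_iff.2 (hcyc _ (List.get_mem L l)).1
  by_cases hN : N ≤ 1
  · have hk : L.length ≤ 1 := by omega
    refine ⟨(A, L), hρ, ?_, hz, ?_, by simp only [numCycles]; omega⟩
    · rcases L with _ | ⟨s, _ | ⟨s', L⟩⟩
      · obtain ⟨Z, h1, -⟩ := compat_quadrant (x := 0) (y := 0) (fun i => by simp)
        exact ⟨Z, h1, by simp⟩
      · obtain ⟨Z, h1, h2, -⟩ := compat_quadrant (x := disp s.1) (y := disp s.1)
          (fun i => mul_self_nonneg _)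
        exact ⟨Z, h1, by simpa using h2⟩
      · simp at hk
    · have : N = 0 ∨ N = 1 := by omega
      rcases this with h | h
      · rw [h]; omega
      · rw [h]; simp; omega
  · push Not at hN
    obtain ⟨π, ⟨e, he, rfl⟩, rfl⟩ := hz
    obtain ⟨f, hf⟩ := base_disp L e he
    obtain ⟨hT, hpath, -⟩ := hρ
    obtain ⟨m, a1, a2⟩ := path_append.1 hpath
    obtain ⟨b1, b2⟩ := base_path L m q a2 hcyc
    simp only [lpsSupport, List.mem_append] at hT
    have hsub : ∀ s ∈ L, (s.1 ++ s.2).Sublist (L.map fun s => s.1 ++ s.2).flatten :=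
      fun s hs => List.sublist_flatten_of_mem (List.mem_map.2 ⟨s, hs, rfl⟩)
    obtain ⟨B, hB⟩ : ∃ B, B = A ++ (L.map fun s => s.2).flatten := ⟨_, rfl⟩
    obtain ⟨S, hS⟩ : ∃ S : Set (List (Trans 2)), S = {X | ∃ s ∈ L, s.1 = X} := ⟨_, rfl⟩
    have hBl : B.length ≤ N := by rw [hB, List.length_append]; omega
    have hFam : Fam T q S B := by
      rw [hB, hS]
      refine ⟨?_, path_append.2 ⟨m, a1, b1⟩, ?_⟩
      · intro t ht
        rcases List.mem_append.1 ht with h | h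
        · exact hT t (Or.inl h)
        · simp only [List.mem_flatten, List.mem_map] at h
          obtain ⟨_, ⟨s, hs, rfl⟩, hts⟩ := h
          exact hT t (Or.inr ((hsub s hs).subset (by simp [hts])))
      · rintro X ⟨s, hs, rfl⟩
        obtain ⟨r', A', Z, e', c1, c2, c3⟩ := b2 s hs
        exact ⟨r', A ++ A', Z, by rw [e', List.append_assoc], path_append.2 ⟨m, a1, c1⟩, c2, c3⟩
    have hGood : ∀ l : Fin L.length, Good T q S (L.get l).1 := by
      intro l
      have hl := List.get_mem L l
      refine ⟨(hcyc _ hl).1, fun t ht => hT t (Or.inr ((hsub _ hl).subset (List.mem_append_left _ ht))), ?_⟩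
      intro W hW
      exact hW.2.2 _ (by rw [hS]; exact ⟨_, hl, rfl⟩)
    have hXl : ∀ l : Fin L.length, (L.get l).1.length ≤ N := by
      intro l
      have := Finset.single_le_sum (f := fun l : Fin L.length => (L.get l).1.length)
        (fun _ _ => Nat.zero_le _) (Finset.mem_univ l)
      omega
    have hXb : ∀ (l : Fin L.length) i, |disp (L.get l).1 i| ≤ (N : ℤ) ^ 2 := fun l i =>
      disp_bound' (hGood l).2.1 (hXl l) (by omega) i
    have hzz : disp (lpsWord (A, L) e) = disp B + ∑ l, f l • disp (L.get l).1 := by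
      simp only [lpsWord]
      rw [disp_append, hf, hB, disp_append]; abel
    rw [hzz]
    have q0 : N ^ 1 ≤ N ^ 30 := Nat.pow_le_pow_right (by omega) (by norm_num)
    have q1 : N ^ 6 ≤ N ^ 30 := Nat.pow_le_pow_right (by omega) (by norm_num)
    have q2 : N ^ 32 ≤ N ^ 40 := Nat.pow_le_pow_right (by omega) (by norm_num)
    have q3 := two_pow_le hN 30
    have q4 := two_pow_le hN 31
    simp only [Nat.reduceAdd, pow_one] at q0 q3 q4
    by_cases hk : L.length = 0
    · have hL : L = [] := List.length_eq_zero_iff.1 hk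
      subst hL
      refine ⟨(B, []), ⟨?_, ?_, by simp⟩, ?_, ?_, ?_, by simp [numCycles]⟩
      · simpa [lpsSupport] using hFam.1
      · simpa [lpsSupport] using hFam.2.1
      · obtain ⟨Z, h1, -⟩ := compat_quadrant (x := 0) (y := 0) (fun i => by simp)
        exact ⟨Z, h1, by simp⟩
      · exact ⟨_, ⟨[], rfl, rfl⟩, by simp [lpsWord]⟩
      · simp [lpsLen, lpsSupport]; omega
    · obtain ⟨e', s1, i, j, s2⟩ := stepA (fun l => disp (L.get l).1) (N ^ 2)
        (Nat.one_le_pow _ _ (by omega)) (fun l i => by push_cast; exact hXb l i)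
        ⟨0, by omega⟩ f
      rw [← s1]
      obtain ⟨W, w1, w2, w3⟩ := fam_sum (fun l => (L.get l).1) hFam hGood
        (fun l => if l = i ∨ l = j then 0 else e' l)
      have hsum : ∑ l, e' l • disp (L.get l).1
          = ∑ l, (if l = i ∨ l = j then 0 else e' l) • disp (L.get l).1
            + e' i • disp (L.get i).1 + (if j = i then 0 else e' j) • disp (L.get j).1 := by
        have : ∀ l, e' l • disp (L.get l).1
          = (if l = i ∨ l = j then 0 else e' l) • disp (L.get l).1
            + (if l = i then e' i • disp (L.get i).1 else 0)
            + (if l = j then (if j = i then 0 else e' j) • disp (L.get j).1 else 0) := by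
          intro l
          by_cases u1 : l = i
          · subst u1
            by_cases u2 : l = j
            · subst u2; simp
            · simp [u2]
          · by_cases u2 : l = j
            · subst u2; simp [u1]
            · simp [u1, u2]
        rw [Finset.sum_congr rfl (fun l _ => this l)]
        simp only [Finset.sum_add_distrib, Finset.sum_ite_eq', Finset.mem_univ, if_true]
      rw [hsum, ← add_assoc, ← add_assoc, ← w2]
      have hWl : W.length ≤ N + 2 * N ^ 5 := by
        rw [w3]
        have : ∑ l : Fin L.length, (if l = i ∨ l = j then 0 else e' l) * (L.get l).1.length
            ≤ ∑ l : Fin L.length, (2 * (N ^ 2) ^ 2) * (L.get l).1.length := by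
          refine Finset.sum_le_sum fun l _ => Nat.mul_le_mul_right _ ?_
          split_ifs with h
          · exact Nat.zero_le _
          · push Not at h
            exact s2 l h.1 h.2
        rw [← Finset.mul_sum] at this
        have h2 : (2 * (N ^ 2) ^ 2) * ∑ l : Fin L.length, (L.get l).1.length ≤ 2 * N ^ 5 := by
          calc _ ≤ (2 * (N ^ 2) ^ 2) * N := Nat.mul_le_mul_left _ (by omega)
            _ = _ := by ring
        omega
      have q5 := two_pow_le hN 5
      simp only [Nat.reduceAdd] at q5
      exact (stepB hN hFam w1 (hGood i) (hGood j) hBl (hXl i) (hXl j)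
        (disp_bound' hFam.1 hBl (by omega)) (hXb i) (hXb j) _ _).mono (by omega)

/-- The displacements of a linear path scheme from `q` to `q`
in a 2-VASS are captured by finitely many zigzag-free linear path schemes from
`q` to `q`, of polynomial length and with at most two cycles each. -/
theorem statement7 :
    ∃ c : ℕ, ∀ (Q : Finset ℕ) (T : Finset (Trans 2)),
      (∀ t ∈ T, t.1 ∈ Q ∧ t.2.2 ∈ Q) →
      ∀ q ∈ Q, ∀ ρ : LPS 2, IsLPSFrom T q q ρ →
      ∃ R : Finset (LPS 2),
        (∀ σ ∈ R, IsLPSFrom T q q σ ∧ ZigzagFree σ) ∧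
        (DispSet ρ ⊆ ⋃ σ ∈ R, DispSet σ) ∧
        (∀ σ ∈ R, lpsLen σ ≤ (lpsLen ρ + tnorm T) ^ c) ∧
        (∀ σ ∈ R, numCycles σ ≤ 2) := by
  refine ⟨40, fun Q T _ q _ ρ hρ => ?_⟩
  have hfin : {σ : LPS 2 | (IsLPSFrom T q q σ ∧ lpsLen σ ≤ (lpsLen ρ + tnorm T) ^ 40 ∧
      numCycles σ ≤ 2) ∧ ZigzagFree σ}.Finite :=
    (fin_lps T q q _).subset fun σ h => h.1
  refine ⟨hfin.toFinset, ?_, ?_, ?_, ?_⟩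
  · intro σ hσ
    rw [Set.Finite.mem_toFinset] at hσ
    exact ⟨hσ.1.1, hσ.2⟩
  · intro z hz
    obtain ⟨σ, h1, h2, h3, h4, h5⟩ := main_gl T q ρ hρ z hz
    simp only [Set.mem_iUnion]
    exact ⟨σ, by rw [Set.Finite.mem_toFinset]; exact ⟨⟨h1, h4, h5⟩, h2⟩, h3⟩
  · intro σ hσ
    rw [Set.Finite.mem_toFinset] at hσ
    exact hσ.1.2.1
  · intro σ hσ
    rw [Set.Finite.mem_toFinset] at hσ
    exact hσ.1.2.2

end VASS
end
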